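/- arXiv:1808.06333 — 6 statements merged into one kernel-verified Lean document; each statement's English description precedes it below -/
import Mathlib

section
/- Let A be a semisimple unital complex Banach algebra and let S denote the set of finite-rank elements of A (which, by a theorem of Aupetit and Mouton, coincides with the socle Soc A). If S is a closed subset of A, then there exists a nonnegative integer n such that rank(a) ≤ n for every a ∈ S. -/
open scoped ENNReal

/-- The spectral rank of an element of a complex algebra:
`rank a = sup_{x ∈ A} #σ'(x·a)`, where `σ'` is the nonzero spectrum and `#` is
the extended cardinality. -/
noncomputable def spectralRank {A : Type*} [Ring A] [Algebra ℂ A] (a : A) : ℕ∞ :=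
  ⨆ x : A, ((spectrum ℂ (x * a)) \ {0}).encard

/-!
If the finite-rank elements form a closed set, then every family of pairwise orthogonal minimal
idempotents `d₀, d₁, …` is finite: otherwise a convergent sum `∑ cₖ dₖ` with `cₖ ≠ 0` would have
finite rank, although its spectrum contains all the `cₖ`. A maximal such family is therefore finite,
and by semisimplicity its sum `p` satisfies `p * a = a` for every finite-rank `a`, so that
`rank a = rank (p * a) ≤ rank p`.

Idempotents are produced without holomorphic functional calculus. If `w = v - v ^ 2` is
quasinilpotent, then `t - t ^ 2 = w` has a second, quasinilpotent solution `t`, given by the Catalan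
power series in `w`, and `(v - t) / (1 - 2 * t)` is idempotent.
-/

open Filter Polynomial Topology

section Spectrum

variable {𝕜 A : Type*} [Field 𝕜] [Ring A] [Algebra 𝕜 A]

theorem mem_spectrum_of_mul_eq_smul {a d : A} {c : 𝕜} (hd : d ≠ 0) (h : a * d = c • d) :
    c ∈ spectrum 𝕜 a := by
  rw [spectrum.mem_iff]
  intro hu
  refine hd (hu.mul_right_eq_zero.mp ?_)
  rw [sub_mul, h, ← Algebra.smul_def, sub_self]

theorem mem_spectrum_add_of_mul_eq_zero {a b : A} {z : 𝕜} (hab : a * b = 0) (hba : b * a = 0)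
    (hz : z ≠ 0) (h : z ∈ spectrum 𝕜 a) : z ∈ spectrum 𝕜 (a + b) := by
  rw [spectrum.mem_iff] at h ⊢
  contrapose! h
  have hcomm : Commute (algebraMap 𝕜 A z - a) (algebraMap 𝕜 A z - b) :=
    (Algebra.commute_algebraMap_left z _).sub_left
      ((Algebra.commute_algebraMap_right z a).sub_right (hab.trans hba.symm))
  have hprod : (algebraMap 𝕜 A z - a) * (algebraMap 𝕜 A z - b)
      = algebraMap 𝕜 A z * (algebraMap 𝕜 A z - (a + b)) := by
    simp only [mul_sub, sub_mul, mul_add, hab, Algebra.commutes z a]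
    abel
  refine (hcomm.isUnit_mul_iff.mp ?_).1
  rw [hprod]
  exact ((IsUnit.mk0 z hz).map (algebraMap 𝕜 A)).mul h

theorem isUnit_add_smul_one_sub {q b c : A} (hqb : q * b = b) (hbq : b * q = b) (hqc : q * c = c)
    (hcq : c * q = c) (hbc : b * c = q) (hcb : c * b = q) {z : 𝕜} (hz : z ≠ 0) :
    IsUnit (b + z • (1 - q)) := by
  have hq : q * q = q := by
    nth_rw 2 [← hbc]
    rw [← mul_assoc, hqb, hbc]
  refine isUnit_iff_exists.mpr ⟨c + z⁻¹ • (1 - q), ?_, ?_⟩ <;>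
    simp [mul_add, add_mul, mul_sub, sub_mul, hqb, hbq, hqc, hcq, hbc, hcb, hq, hz]

theorem eval_eq_zero_of_mem_spectrum_of_aeval_eq_zero {a : A} {p : 𝕜[X]} (hp : aeval a p = 0)
    {z : 𝕜} (hz : z ∈ spectrum 𝕜 a) : p.eval z = 0 := by
  have hmem : p.eval z ∈ spectrum 𝕜 (aeval a p) := spectrum.subset_polynomial_aeval a p ⟨z, hz, rfl⟩
  rw [hp, spectrum.mem_iff, sub_zero] at hmem
  by_contra h
  exact hmem ((IsUnit.mk0 _ h).map (algebraMap 𝕜 A))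

theorem encard_spectrum_diff_zero_le_finrank {b : A} (W : Submodule 𝕜 A) [FiniteDimensional 𝕜 W]
    (hW : ∀ y, b * y * b ∈ W) : (spectrum 𝕜 b \ {0}).encard ≤ Module.finrank 𝕜 W := by
  -- For dimension reasons `b * p(b) * b = 0` for some nonzero `p` of degree at most `finrank W`.
  let φ : degreeLT 𝕜 (Module.finrank 𝕜 W + 1) →ₗ[𝕜] W :=
    { toFun := fun p => ⟨b * aeval b (p : 𝕜[X]) * b, hW _⟩
      map_add' := fun p r => by ext; simp [mul_add, add_mul]
      map_smul' := fun c p => by ext; simp }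
  obtain ⟨⟨p, hpdeg⟩, hpker, hp0⟩ := Submodule.exists_mem_ne_zero_of_ne_bot
    (LinearMap.ker_ne_bot_of_finrank_lt (f := φ) (by
      rw [(degreeLTEquiv 𝕜 _).finrank_eq, Module.finrank_fin_fun]; omega))
  have hp0 : p ≠ 0 := fun h => hp0 (Subtype.ext h)
  have haeval : aeval b (X * p * X) = 0 := by
    simpa [φ] using congrArg Subtype.val hpker
  have hroots : spectrum 𝕜 b \ {0} ⊆ p.rootSet 𝕜 := by
    rintro z ⟨hz, hz0⟩
    have heval := eval_eq_zero_of_mem_spectrum_of_aeval_eq_zero haeval hz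
    rw [mem_rootSet, coe_aeval_eq_eval]
    simpa [hp0, show z ≠ 0 from hz0] using heval
  have hdeg : p.natDegree ≤ Module.finrank 𝕜 W :=
    Nat.lt_succ_iff.mp ((natDegree_lt_iff_degree_lt hp0).mpr (mem_degreeLT.mp hpdeg))
  calc (spectrum 𝕜 b \ {0}).encard
    _ ≤ (p.rootSet 𝕜).encard := Set.encard_le_encard hroots
    _ = (p.rootSet 𝕜).ncard := (Set.Finite.cast_ncard_eq (rootSet_finite p 𝕜)).symm
    _ ≤ Module.finrank 𝕜 W := by exact_mod_cast (ncard_rootSet_le p 𝕜).trans hdeg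

end Spectrum

section SpectralRank

variable {A : Type*} [Ring A] [Algebra ℂ A]

theorem encard_spectrum_mul_le_spectralRank (x a : A) :
    (spectrum ℂ (x * a) \ {0}).encard ≤ spectralRank a :=
  le_iSup (fun x : A => (spectrum ℂ (x * a) \ {0}).encard) x

theorem spectralRank_mul_le_right (x a : A) : spectralRank (x * a) ≤ spectralRank a := by
  refine iSup_le fun y => ?_
  rw [← mul_assoc]
  exact encard_spectrum_mul_le_spectralRank _ _

theorem spectralRank_mul_le_left (a x : A) : spectralRank (a * x) ≤ spectralRank a := by
  refine iSup_le fun y => ?_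
  rw [← mul_assoc, spectrum.nonzero_mul_comm, ← mul_assoc]
  exact encard_spectrum_mul_le_spectralRank _ _

theorem finite_spectrum_of_spectralRank_lt_top {a : A} (h : spectralRank a < ⊤) :
    (spectrum ℂ a).Finite := by
  have hfin : (spectrum ℂ a \ {0}).Finite := by
    rw [← Set.encard_lt_top_iff]
    simpa using (encard_spectrum_mul_le_spectralRank 1 a).trans_lt h
  exact hfin.of_sdiff (Set.finite_singleton 0)

theorem spectralRank_le_finrank {a : A} (W : Submodule ℂ A) [FiniteDimensional ℂ W]
    (hW : ∀ y, a * y * a ∈ W) : spectralRank a ≤ Module.finrank ℂ W := by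
  refine iSup_le fun x => ?_
  have hxW : ∀ y, x * a * y * (x * a) ∈ W.map (LinearMap.mulLeft ℂ x) := fun y =>
    ⟨_, hW (y * x), by simp [mul_assoc]⟩
  refine (encard_spectrum_diff_zero_le_finrank _ hxW).trans ?_
  exact_mod_cast Submodule.finrank_map_le _ _

theorem spectralRank_lt_spectralRank {f q : A} (hf : IsIdempotentElem f) (hq : IsIdempotentElem q)
    (hqf : q * f = f) (hfq : f * q = f) (hne : f ≠ q) (hr : spectralRank f < ⊤) :
    spectralRank f < spectralRank q := by
  obtain ⟨x, hx⟩ : ∃ x : A, (spectrum ℂ (x * f) \ {0}).encard = spectralRank f :=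
    ENat.exists_eq_iSup_of_lt_top hr
  have hfin : (spectrum ℂ (x * f) \ {0}).Finite := by
    rwa [← Set.encard_lt_top_iff, hx]
  obtain ⟨c, hc⟩ := (hfin.insert 0).exists_notMem
  rw [Set.mem_insert_iff, not_or] at hc
  have hcompress : spectrum ℂ (x * f) \ {0} = spectrum ℂ (f * x * f) \ {0} := by
    rw [mul_assoc, spectrum.nonzero_mul_comm f, mul_assoc, hf.eq]
  have hf_sub : f * (q - f) = 0 := by rw [mul_sub, hfq, hf.eq, sub_self]
  have hsub_f : (q - f) * f = 0 := by rw [sub_mul, hqf, hf.eq, sub_self]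
  have hsub_sub : (q - f) * (q - f) = q - f := by
    rw [mul_sub, hsub_f, sub_mul, hq.eq, hfq, sub_zero]
  -- On top of the nonzero spectrum of `x * f`, that of `v` contains the new value `c`.
  set v : A := f * x * f + c • (q - f) with hv
  have hvq : v * q = v := by
    rw [hv, add_mul, smul_mul_assoc, sub_mul, hq.eq, hfq, mul_assoc, hfq]
  have hinsert : insert c (spectrum ℂ (x * f) \ {0}) ⊆ spectrum ℂ (v * q) \ {0} := by
    rw [hvq]
    rintro z (rfl | hz)
    · refine ⟨mem_spectrum_of_mul_eq_smul (sub_ne_zero.mpr hne.symm) ?_, hc.1⟩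
      rw [hv, add_mul, mul_assoc, hf_sub, mul_zero, zero_add, smul_mul_assoc, hsub_sub]
    · rw [hcompress] at hz
      refine ⟨mem_spectrum_add_of_mul_eq_zero ?_ ?_ hz.2 hz.1, hz.2⟩
      · rw [mul_smul_comm, mul_assoc, hf_sub, mul_zero, smul_zero]
      · rw [smul_mul_assoc, ← mul_assoc, ← mul_assoc, hsub_f, zero_mul, zero_mul, smul_zero]
  have hcard := (Set.encard_le_encard hinsert).trans (encard_spectrum_mul_le_spectralRank v q)
  rw [Set.encard_insert_of_notMem hc.2, hx] at hcard
  exact (ENat.add_one_le_iff hr.ne).mp hcard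

end SpectralRank

section SpectralRadius

open scoped NNReal

theorem spectralRadius_eq_zero_iff {𝕜 A : Type*} [NormedField 𝕜] [Ring A] [Algebra 𝕜 A] {a : A} :
    spectralRadius 𝕜 a = 0 ↔ spectrum 𝕜 a ⊆ {0} := by
  simp [spectralRadius, Set.subset_def]

theorem isUnit_one_sub_two_mul {A : Type*} [NormedRing A] [NormedAlgebra ℂ A] {w t : A}
    (hw : spectralRadius ℂ w < 4⁻¹) (ht : t - t * t = w) : IsUnit (1 - 2 * t) := by
  have hunit : IsUnit (1 - (4 : ℂ) • w) := by
    refine spectrum.isUnit_one_sub_smul_of_lt_inv_radius (ENNReal.lt_inv_iff_lt_inv.mpr ?_)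
    simpa using hw
  have hsq : 1 - (4 : ℂ) • w = (1 - 2 * t) * (1 - 2 * t) := by
    rw [← ht, ofNat_smul_eq_nsmul]
    noncomm_ring
  rw [hsq] at hunit
  exact ((Commute.refl _).isUnit_mul_iff.mp hunit).1

variable {A : Type*} [NormedRing A] [NormedAlgebra ℂ A] [CompleteSpace A]

theorem spectralRadius_mul_le_of_commute {a b : A} (h : Commute a b) :
    spectralRadius ℂ (a * b) ≤ spectralRadius ℂ a * ‖b‖₊ := by
  have hlim := ENNReal.Tendsto.mul_const (b := (‖b‖₊ : ℝ≥0∞))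
    (spectrum.pow_nnnorm_pow_one_div_tendsto_nhds_spectralRadius a) (.inr ENNReal.coe_ne_top)
  refine le_of_tendsto_of_tendsto
    (spectrum.pow_nnnorm_pow_one_div_tendsto_nhds_spectralRadius (a * b)) hlim ?_
  filter_upwards [eventually_gt_atTop 0] with n hn
  calc (‖(a * b) ^ n‖₊ : ℝ≥0∞) ^ (1 / n : ℝ)
    _ ≤ ((‖a ^ n‖₊ : ℝ≥0∞) * (‖b‖₊ : ℝ≥0∞) ^ n) ^ (1 / n : ℝ) := by
      gcongr
      rw [h.mul_pow]
      exact_mod_cast (nnnorm_mul_le _ _).trans (by gcongr; exact nnnorm_pow_le' b hn)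
    _ = (‖a ^ n‖₊ : ℝ≥0∞) ^ (1 / n : ℝ) * ‖b‖₊ := by
      rw [ENNReal.mul_rpow_of_nonneg _ _ (by positivity), one_div,
        ENNReal.pow_rpow_inv_natCast hn.ne']

theorem summable_pow_mul_norm_pow {a : A} {r : ℝ≥0} (h : spectralRadius ℂ a < (r : ℝ≥0∞)⁻¹) :
    Summable fun n => (r : ℝ) ^ n * ‖a ^ n‖ := by
  obtain ⟨s, has, hsr⟩ := ENNReal.lt_iff_exists_nnreal_btwn.mp h
  have hgeom : Summable fun n => ((r * s : ℝ≥0) : ℝ) ^ n := by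
    refine summable_geometric_of_lt_one (NNReal.coe_nonneg _) ?_
    have hlt : (r : ℝ≥0∞) * s < 1 := by
      rw [mul_comm]; exact ENNReal.mul_lt_of_lt_div (by rwa [one_div])
    exact_mod_cast hlt
  refine hgeom.of_norm_bounded_eventually_nat ?_
  have hlim := spectrum.pow_nnnorm_pow_one_div_tendsto_nhds_spectralRadius a
  filter_upwards [hlim.eventually_lt_const has, eventually_gt_atTop 0] with n hn hpos
  rw [one_div, ENNReal.rpow_inv_lt_iff (by positivity), ENNReal.rpow_natCast] at hn
  have hpow : ‖a ^ n‖ ≤ (s : ℝ) ^ n := by exact_mod_cast hn.le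
  rw [Real.norm_of_nonneg (by positivity), NNReal.coe_mul, mul_pow]
  gcongr

end SpectralRadius

section IdempotentLifting

variable {A : Type*} [NormedRing A] [NormedAlgebra ℂ A] [CompleteSpace A]

theorem catalan_le_four_pow (n : ℕ) : catalan n ≤ 4 ^ n := by
  rw [catalan_eq_centralBinom_div]
  exact (Nat.div_le_self _ _).trans (Nat.centralBinom_le_four_pow n)

theorem summable_norm_catalan_nsmul_pow {w : A} (hw : spectralRadius ℂ w < 4⁻¹) :
    Summable fun n => ‖catalan n • w ^ n‖ := by
  refine (summable_pow_mul_norm_pow (r := 4) hw).of_nonneg_of_le (fun n => norm_nonneg _)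
    fun n => (norm_nsmul_le ..).trans ?_
  gcongr
  exact_mod_cast catalan_le_four_pow n

-- `c` is the Catalan generating function, which satisfies `c = 1 + w * c ^ 2`.
theorem exists_mul_sub_mul_self_eq {w : A} (hw : spectralRadius ℂ w < 4⁻¹) :
    ∃ c : A, w * c - w * c * (w * c) = w ∧ ∀ v, Commute v w → Commute v c := by
  have hsum := summable_norm_catalan_nsmul_pow hw
  have hsquare := summable_norm_sum_mul_antidiagonal_of_summable_norm hsum hsum
  set c := ∑' n, catalan n • w ^ n with hc
  have hcomm : ∀ v, Commute v w → Commute v c := fun v hv =>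
    Commute.tsum_right v fun n => (hv.pow_right n).smul_right _
  have hquad : c = 1 + w * (c * c) := by
    rw [hc, tsum_mul_tsum_eq_tsum_sum_antidiagonal_of_summable_norm hsum hsum,
      ← hsquare.of_norm.tsum_mul_left, hsum.of_norm.tsum_eq_zero_add, catalan_zero, pow_zero,
      one_smul]
    congr 2
    funext n
    rw [catalan_succ', Finset.sum_smul, Finset.mul_sum]
    refine Finset.sum_congr rfl fun ij hij => ?_
    rw [← Finset.HasAntidiagonal.mem_antidiagonal.mp hij, smul_mul_smul_comm, ← pow_add,
      mul_smul_comm, ← pow_succ']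
  refine ⟨c, ?_, hcomm⟩
  calc w * c - w * c * (w * c)
    _ = w * c - w * (w * (c * c)) := by
      rw [mul_assoc w c, ← mul_assoc c w, ← hcomm w rfl, mul_assoc w c c]
    _ = w * (c - w * (c * c)) := (mul_sub _ _ _).symm
    _ = w := by rw [sub_eq_of_eq_add hquad, mul_one]

theorem isIdempotentElem_inv_mul_sub {R : Type*} [Ring R] {v t : R} {u : Rˣ}
    (hu : (u : R) = 1 - 2 * t) (hvt : Commute v t) (h : t - t * t = v - v * v) :
    IsIdempotentElem (↑u⁻¹ * (v - t)) := by
  have hsq : (v - t) * (v - t) = u * (v - t) := by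
    have hvv : v * v = v - (t - t * t) := by rw [h, sub_sub_cancel]
    rw [hu]
    simp only [mul_sub, sub_mul, two_mul, add_mul, one_mul, hvv, hvt.eq]
    abel
  have hcomm : Commute (v - t) ↑u⁻¹ := by
    refine Commute.units_inv_right ?_
    rw [hu]
    exact (Commute.one_right _).sub_right
      ((Commute.ofNat_right _ 2).mul_right (hvt.sub_left (Commute.refl t)))
  rw [IsIdempotentElem, mul_assoc, ← mul_assoc (v - t), hcomm.eq, mul_assoc _ (v - t), hsq,
    Units.inv_mul_cancel_left]

theorem exists_isIdempotentElem_mul_of_spectralRadius_mul_one_sub {v : A}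
    (hv : spectralRadius ℂ (v * (1 - v)) = 0) (h1 : 1 ∈ spectrum ℂ v) :
    ∃ e y : A, IsIdempotentElem e ∧ e ≠ 0 ∧ Commute v y ∧ e = v * y := by
  set w := v * (1 - v) with hw
  have hv1 : Commute v (1 - v) := (Commute.one_right v).sub_right rfl
  have hvw : Commute v w := (Commute.refl v).mul_right hv1
  have hw4 : spectralRadius ℂ w < 4⁻¹ := by rw [hv]; simp
  obtain ⟨c, hc, hcomm⟩ := exists_mul_sub_mul_self_eq hw4
  have hvc : Commute v c := hcomm v hvw
  have hvt : Commute v (w * c) := hvw.mul_right hvc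
  obtain ⟨u, hu⟩ := isUnit_one_sub_two_mul hw4 hc
  have hvu : Commute v ↑u⁻¹ := by
    refine Commute.units_inv_right ?_
    rw [hu]
    exact (Commute.one_right v).sub_right ((Commute.ofNat_right v 2).mul_right hvt)
  refine ⟨↑u⁻¹ * (v - w * c), ↑u⁻¹ * (1 - (1 - v) * c),
    isIdempotentElem_inv_mul_sub hu hvt (by rw [hc, hw, mul_sub, mul_one]), fun he => ?_,
    hvu.mul_right ((Commute.one_right v).sub_right (hv1.mul_right hvc)), ?_⟩
  · have hvwc : v = w * c := sub_eq_zero.mp ((Units.mul_right_eq_zero _).mp he)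
    have hv0 : spectralRadius ℂ v = 0 := by
      rw [hvwc, ← nonpos_iff_eq_zero]
      exact (spectralRadius_mul_le_of_commute (hcomm w rfl)).trans_eq (by rw [hv, zero_mul])
    exact one_ne_zero (spectralRadius_eq_zero_iff.mp hv0 h1)
  · rw [← mul_assoc, hvu.eq, mul_assoc (↑u⁻¹ : A) v, mul_sub v, mul_one, ← mul_assoc v, ← hw]

theorem exists_eval_X_mul_eq_one_and_eval_eq_zero {𝕜 : Type*} [Field 𝕜] (T : Finset 𝕜) {z : 𝕜}
    (hz : z ≠ 0) : ∃ r : 𝕜[X], (X * r).eval z = 1 ∧ ∀ y ∈ T, y ≠ z → (X * r).eval y = 0 := by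
  classical
  refine ⟨C z⁻¹ * Lagrange.basis (insert z T) id z, ?_, fun y hy hyz => ?_⟩
  · have hself : eval z (Lagrange.basis (insert z T) id z) = 1 :=
      Lagrange.eval_basis_self Function.injective_id.injOn (Finset.mem_insert_self z T)
    simp [hself, hz]
  · have hne : eval y (Lagrange.basis (insert z T) id z) = 0 :=
      Lagrange.eval_basis_of_ne (v := id) hyz.symm (Finset.mem_insert_of_mem hy)
    simp [hne]

theorem exists_isIdempotentElem_mul_of_mem_spectrum {g : A} (hg : (spectrum ℂ g).Finite) {z : ℂ}
    (hz : z ∈ spectrum ℂ g) (hz0 : z ≠ 0) :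
    ∃ e : A, IsIdempotentElem e ∧ e ≠ 0 ∧ (∃ x, e = g * x) ∧ ∃ y, e = y * g := by
  obtain ⟨r, hrz, hr⟩ := exists_eval_X_mul_eq_one_and_eval_eq_zero hg.toFinset hz0
  have h1 : (1 : ℂ) ∈ spectrum ℂ (aeval g (X * r)) :=
    spectrum.subset_polynomial_aeval g (X * r) ⟨z, hz, hrz⟩
  have hquasi : spectralRadius ℂ (aeval g (X * r) * (1 - aeval g (X * r))) = 0 := by
    refine spectralRadius_eq_zero_iff.mpr ?_
    have hpoly : aeval g (X * r) * (1 - aeval g (X * r)) = aeval g (X * r * (1 - X * r)) := by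
      simp only [map_mul, map_sub, map_one]
    rw [hpoly, spectrum.map_polynomial_aeval_of_nonempty g _ ⟨z, hz⟩]
    rintro _ ⟨y, hy, rfl⟩
    rw [Set.mem_singleton_iff]
    by_cases hyz : y = z
    · simp only [hyz, eval_mul (p := X * r), hrz, eval_sub, eval_one, sub_self, mul_zero]
    · simp only [eval_mul (p := X * r), hr y (hg.mem_toFinset.mpr hy) hyz, zero_mul]
  obtain ⟨e, y, he, he0, hcomm, hey⟩ :=
    exists_isIdempotentElem_mul_of_spectralRadius_mul_one_sub hquasi h1
  have hX : aeval g (X * r) = g * aeval g r := by simp only [map_mul, aeval_X]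
  have hX' : aeval g (X * r) = aeval g r * g := by rw [mul_comm X]; simp only [map_mul, aeval_X]
  exact ⟨e, he, he0, ⟨aeval g r * y, by rw [hey, hX, mul_assoc]⟩,
    ⟨y * aeval g r, by rw [hey, hcomm.eq, hX', mul_assoc]⟩⟩

end IdempotentLifting
section MinimalIdempotents

/-- Semisimplicity in spectral form: the radical of a Banach algebra consists of the `a` such that
`x * a` is quasinilpotent for every `x`. -/
def IsSpectrallySemisimple (A : Type*) [Ring A] [Algebra ℂ A] : Prop :=
  ∀ a : A, (∀ x : A, spectralRadius ℂ (x * a) = 0) → a = 0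

theorem IsSpectrallySemisimple.exists_mem_spectrum_mul {A : Type*} [Ring A] [Algebra ℂ A]
    (hA : IsSpectrallySemisimple A) {b : A} (hb : b ≠ 0) :
    ∃ x, ∃ z ∈ spectrum ℂ (x * b), z ≠ 0 := by
  by_contra! h
  exact hb (hA b fun x => spectralRadius_eq_zero_iff.mpr (h x))

/-- A minimal idempotent: a nonzero idempotent `q` whose corner `q * A * q` is `ℂ • q`. -/
structure IsMinimalIdempotent {A : Type*} [Ring A] [Algebra ℂ A] (q : A) : Prop where
  isIdempotentElem : IsIdempotentElem q
  ne_zero : q ≠ 0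
  exists_mul_mul_eq_smul (x : A) : ∃ c : ℂ, q * x * q = c • q

variable {A : Type*} [NormedRing A] [NormedAlgebra ℂ A]

theorem IsMinimalIdempotent.exists_mul_mul_eq_smul_of_isSpectrallySemisimple
    (hA : IsSpectrallySemisimple A) {p q : A} (hp : IsMinimalIdempotent p)
    (hq : IsMinimalIdempotent q) : ∃ u : A, ∀ x, ∃ c : ℂ, p * x * q = c • u := by
  by_cases h : ∀ x, p * x * q = 0
  · exact ⟨0, fun x => ⟨0, by rw [h x, smul_zero]⟩⟩
  obtain ⟨x₀, hx₀⟩ := not_forall.mp h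
  set u := p * x₀ * q with hu
  have hpu : p * u = u := by rw [hu, ← mul_assoc, ← mul_assoc, hp.isIdempotentElem.eq]
  have huq : u * q = u := by rw [hu, mul_assoc, hq.isIdempotentElem.eq]
  obtain ⟨y, z, hz, hz0⟩ := hA.exists_mem_spectrum_mul hx₀
  obtain ⟨c, hc⟩ := hq.exists_mul_mul_eq_smul (y * u)
  rw [mul_assoc, mul_assoc, huq] at hc
  have hc0 : c ≠ 0 := by
    rintro rfl
    have hmem : z ∈ spectrum ℂ (y * u * q) \ {0} := ⟨by rwa [mul_assoc, huq], hz0⟩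
    rw [spectrum.nonzero_mul_comm, hc, zero_smul] at hmem
    exact hz0 (spectralRadius_eq_zero_iff.mp spectrum.spectralRadius_zero hmem.1)
  refine ⟨u, fun x => ?_⟩
  obtain ⟨d, hd⟩ := hp.exists_mul_mul_eq_smul (x * q * y)
  refine ⟨c⁻¹ * d, ?_⟩
  calc p * x * q = c⁻¹ • (p * x * (c • q)) := by rw [mul_smul_comm, inv_smul_smul₀ hc0]
    _ = c⁻¹ • (p * (x * q * y) * p * u) := by
      rw [← hc, mul_assoc (p * _) p, hpu]
      simp only [mul_assoc]
    _ = (c⁻¹ * d) • u := by rw [hd, smul_mul_assoc, hpu, mul_smul]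

theorem spectralRank_sum_mul_lt_top (hA : IsSpectrallySemisimple A) {ι : Type*} {s : Finset ι}
    (x : ι → A) {q : ι → A} (hq : ∀ i ∈ s, IsMinimalIdempotent (q i)) :
    spectralRank (∑ i ∈ s, x i * q i) < ⊤ := by
  choose! u hu using fun i (hi : i ∈ s) j (hj : j ∈ s) =>
    (hq i hi).exists_mul_mul_eq_smul_of_isSpectrallySemisimple hA (hq j hj)
  let W := Submodule.span ℂ ((fun ij : ι × ι => x ij.1 * u ij.1 ij.2) '' (s ×ˢ s : Finset (ι × ι)))
  have : FiniteDimensional ℂ W :=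
    FiniteDimensional.span_of_finite ℂ ((Finset.finite_toSet _).image _)
  refine (spectralRank_le_finrank W fun y => ?_).trans_lt (ENat.natCast_lt_top _)
  simp only [Finset.sum_mul, Finset.mul_sum]
  refine Submodule.sum_mem _ fun j hj => Submodule.sum_mem _ fun i hi => ?_
  obtain ⟨c, hc⟩ := hu i hi j hj (y * x j)
  have hterm : x i * q i * y * (x j * q j) = c • (x i * u i j) := by
    rw [← mul_smul_comm, ← hc]
    simp only [mul_assoc]
  rw [hterm]
  exact W.smul_mem c (Submodule.subset_span ⟨(i, j), by simp [hi, hj], rfl⟩)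

variable [CompleteSpace A]

theorem exists_mem_spectrum_ne_zero_of_mul_eq {q v c : A} (hq : IsIdempotentElem q) (hq0 : q ≠ 0)
    (hvc : v * c = q) (hcv : c * v = q) : ∃ z ∈ spectrum ℂ v, z ≠ 0 := by
  by_contra! h
  have hv : spectralRadius ℂ v = 0 := spectralRadius_eq_zero_iff.mpr h
  have hrad : spectralRadius ℂ q ≤ 0 := by
    simpa [hvc, hv] using spectralRadius_mul_le_of_commute (hvc.trans hcv.symm : Commute v c)
  refine one_ne_zero (spectralRadius_eq_zero_iff.mp (nonpos_iff_eq_zero.mp hrad) ?_)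
  exact mem_spectrum_of_mul_eq_smul hq0 (by rw [hq.eq, one_smul])

theorem isMinimalIdempotent_of_forall_exists_mul_eq {q : A} (hq : IsIdempotentElem q) (hq0 : q ≠ 0)
    (hinv : ∀ b, b ≠ 0 → q * b = b → b * q = b →
      ∃ c, q * c = c ∧ c * q = c ∧ b * c = q ∧ c * b = q) :
    IsMinimalIdempotent q := by
  refine ⟨hq, hq0, fun x => ?_⟩
  set v := q * x * q with hv
  have hqv : q * v = v := by rw [hv, ← mul_assoc, ← mul_assoc, hq.eq]
  have hvq : v * q = v := by rw [hv, mul_assoc, hq.eq]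
  rcases eq_or_ne v 0 with h0 | h0
  · exact ⟨0, by rw [h0, zero_smul]⟩
  obtain ⟨c, -, -, hvc, hcv⟩ := hinv v h0 hqv hvq
  obtain ⟨z, hz, hz0⟩ := exists_mem_spectrum_ne_zero_of_mul_eq hq hq0 hvc hcv
  refine ⟨z, ?_⟩
  by_contra hne
  have hqb : q * (v - z • q) = v - z • q := by rw [mul_sub, hqv, mul_smul_comm, hq.eq]
  have hbq : (v - z • q) * q = v - z • q := by rw [sub_mul, hvq, smul_mul_assoc, hq.eq]
  obtain ⟨d, hqd, hdq, hbd, hdb⟩ := hinv _ (sub_ne_zero.mpr hne) hqb hbq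
  have hunit : IsUnit (v - z • q + -z • (1 - q)) :=
    isUnit_add_smul_one_sub hqb hbq hqd hdq hbd hdb (neg_ne_zero.mpr hz0)
  have hsplit : v - z • q + -z • (1 - q) = -(algebraMap ℂ A z - v) := by
    rw [Algebra.algebraMap_eq_smul_one, smul_sub, neg_smul, neg_smul]
    abel
  rw [hsplit, IsUnit.neg_iff] at hunit
  exact hz hunit

theorem exists_mul_eq_of_primitive (hA : IsSpectrallySemisimple A) {q b : A}
    (hq : IsIdempotentElem q) (hrank : spectralRank q < ⊤)
    (hmin : ∀ f, IsIdempotentElem f → f ≠ 0 → q * f = f → f * q = f → f = q)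
    (hb : b ≠ 0) (hqb : q * b = b) (hbq : b * q = b) :
    ∃ c, q * c = c ∧ c * q = c ∧ c * b = q := by
  obtain ⟨x, z, hz, hz0⟩ := hA.exists_mem_spectrum_mul hb
  have hzg : z ∈ spectrum ℂ (q * (x * b)) \ {0} := by
    rw [spectrum.nonzero_mul_comm, mul_assoc, hbq]
    exact ⟨hz, hz0⟩
  have hg : spectralRank (q * (x * b)) < ⊤ := (spectralRank_mul_le_left _ _).trans_lt hrank
  obtain ⟨f, hf, hf0, ⟨x', hfx⟩, y, hfy⟩ :=
    exists_isIdempotentElem_mul_of_mem_spectrum (finite_spectrum_of_spectralRank_lt_top hg)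
      hzg.1 hz0
  have hfq : f = q := by
    refine hmin f hf hf0 ?_ ?_
    · rw [hfx, ← mul_assoc, ← mul_assoc, hq.eq]
    · rw [hfy, mul_assoc, mul_assoc, mul_assoc, hbq]
  refine ⟨q * (y * q * x) * q, ?_, ?_, ?_⟩
  · rw [← mul_assoc, ← mul_assoc, hq.eq]
  · rw [mul_assoc, hq.eq]
  · calc q * (y * q * x) * q * b = q * (y * (q * (x * b))) := by
          rw [mul_assoc _ q b, hqb]; simp only [mul_assoc]
      _ = q := by rw [← hfy, hfq, hq.eq]

theorem isMinimalIdempotent_of_primitive (hA : IsSpectrallySemisimple A) {q : A}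
    (hq : IsIdempotentElem q) (hq0 : q ≠ 0) (hrank : spectralRank q < ⊤)
    (hmin : ∀ f, IsIdempotentElem f → f ≠ 0 → q * f = f → f * q = f → f = q) :
    IsMinimalIdempotent q := by
  refine isMinimalIdempotent_of_forall_exists_mul_eq hq hq0 fun b hb hqb hbq => ?_
  obtain ⟨c, hqc, hcq, hcb⟩ := exists_mul_eq_of_primitive hA hq hrank hmin hb hqb hbq
  have hc0 : c ≠ 0 := by
    rintro rfl
    exact hq0 (by rw [← hcb, zero_mul])
  obtain ⟨d, -, hdq, hdc⟩ := exists_mul_eq_of_primitive hA hq hrank hmin hc0 hqc hcq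
  have hdb : d = b := by rw [← hdq, ← hcb, ← mul_assoc, hdc, hqb]
  exact ⟨c, hqc, hcq, hdb ▸ hdc, hcb⟩

theorem exists_isMinimalIdempotent_eq_mul (hA : IsSpectrallySemisimple A) {b : A} (hb : b ≠ 0)
    (hrank : spectralRank b < ⊤) : ∃ q x, IsMinimalIdempotent q ∧ q = b * x := by
  have hrank_mul (x : A) : spectralRank (b * x) < ⊤ :=
    (spectralRank_mul_le_left b x).trans_lt hrank
  let P (e : A) : Prop := IsIdempotentElem e ∧ e ≠ 0 ∧ ∃ x, e = b * x
  have hP : ∃ e, P e := by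
    obtain ⟨x, z, hz, hz0⟩ := hA.exists_mem_spectrum_mul hb
    have hz' : z ∈ spectrum ℂ (b * x) \ {0} := by
      rw [spectrum.nonzero_mul_comm]
      exact ⟨hz, hz0⟩
    obtain ⟨e, he, he0, ⟨y, hey⟩, -⟩ := exists_isIdempotentElem_mul_of_mem_spectrum
      (finite_spectrum_of_spectralRank_lt_top (hrank_mul x)) hz'.1 hz0
    exact ⟨e, he, he0, x * y, by rw [hey, mul_assoc]⟩
  obtain ⟨q, ⟨hq, hq0, x, hqx⟩, hmin⟩ := exists_minimalFor_of_wellFoundedLT P spectralRank hP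
  refine ⟨q, x, isMinimalIdempotent_of_primitive hA hq hq0 (hqx ▸ hrank_mul x) ?_, hqx⟩
  intro f hf hf0 hqf hfq
  by_contra hne
  have hfx : f = b * (x * f) := by rw [← mul_assoc, ← hqx, hqf]
  have hlt := spectralRank_lt_spectralRank hf hq hqf hfq hne (hfx ▸ hrank_mul _)
  exact hlt.not_ge (hmin ⟨hf, hf0, x * f, hfx⟩ hlt.le)

end MinimalIdempotents

section Closedness

theorem exists_summable_smul {𝕜 E : Type*} [RCLike 𝕜] [NormedAddCommGroup E] [NormedSpace 𝕜 E]
    [CompleteSpace E] (d : ℕ → E) :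
    ∃ c : ℕ → 𝕜, (∀ k, c k ≠ 0) ∧ Tendsto c atTop (𝓝 0) ∧ Summable fun k => c k • d k := by
  have hpos (k : ℕ) : 0 < 1 + ‖d k‖ := by positivity
  have hnorm (k : ℕ) : ‖(((1 / 2) ^ k / (1 + ‖d k‖) : ℝ) : 𝕜)‖ = (1 / 2) ^ k / (1 + ‖d k‖) :=
    RCLike.norm_of_nonneg (by positivity)
  refine ⟨fun k => (((1 / 2) ^ k / (1 + ‖d k‖) : ℝ) : 𝕜), fun k => ?_, ?_, ?_⟩
  · rw [← norm_ne_zero_iff, hnorm]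
    positivity
  · refine squeeze_zero_norm (fun k => ?_) summable_geometric_two.tendsto_atTop_zero
    rw [hnorm]
    exact div_le_self (by positivity) (by simp)
  · refine Summable.of_norm_bounded summable_geometric_two fun k => ?_
    rw [norm_smul, hnorm, div_mul_eq_mul_div, div_le_iff₀ (hpos k)]
    gcongr
    simp

variable {A : Type*} [NormedRing A] [NormedAlgebra ℂ A] [CompleteSpace A]

theorem not_isClosed_setOf_spectralRank_lt_top (hA : IsSpectrallySemisimple A) {d : ℕ → A}
    (hd : ∀ k, IsMinimalIdempotent (d k)) (horth : Pairwise fun i j => d i * d j = 0) :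
    ¬ IsClosed {a : A | spectralRank a < ⊤} := by
  intro hclosed
  obtain ⟨c, hc0, hclim, hsum⟩ := exists_summable_smul (𝕜 := ℂ) d
  have hfinite : spectralRank (∑' k, c k • d k) < ⊤ :=
    hclosed.mem_of_tendsto hsum.hasSum <| Eventually.of_forall fun s => by
      simpa using spectralRank_sum_mul_lt_top hA (fun k => c k • (1 : A)) fun k (_ : k ∈ s) => hd k
  have heigen (k : ℕ) : (∑' i, c i • d i) * d k = c k • d k := by
    rw [← hsum.tsum_mul_right, tsum_eq_single k fun i hi => by
      rw [smul_mul_assoc, horth hi, smul_zero], smul_mul_assoc, (hd k).isIdempotentElem.eq]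
  have hrange : Set.range c ⊆ spectrum ℂ (∑' k, c k • d k) := by
    rintro _ ⟨k, rfl⟩
    exact mem_spectrum_of_mul_eq_smul (hd k).ne_zero (heigen k)
  have hzero : (0 : ℂ) ∈ Set.range c :=
    ((finite_spectrum_of_spectralRank_lt_top hfinite).subset hrange).isClosed.mem_of_tendsto hclim
      (Eventually.of_forall Set.mem_range_self)
  obtain ⟨k, hk⟩ := hzero
  exact hc0 k hk

end Closedness

section LeftUnit

/-- A set of pairwise orthogonal minimal idempotents; `Set.Pairwise` ranges over ordered pairs, so
the products vanish in both orders. -/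
structure IsOrthogonalMinimalFamily {A : Type*} [Ring A] [Algebra ℂ A] (E : Set A) : Prop where
  isMinimalIdempotent : ∀ q ∈ E, IsMinimalIdempotent q
  pairwise_mul_eq_zero : E.Pairwise fun p q => p * q = 0

namespace IsOrthogonalMinimalFamily

variable {A : Type*} [Ring A] [Algebra ℂ A]

variable (A) in
theorem exists_maximal : ∃ E : Set A, Maximal IsOrthogonalMinimalFamily E := by
  refine zorn_subset {E : Set A | IsOrthogonalMinimalFamily E}
    fun C hC hchain => ⟨⋃₀ C, ⟨?_, ?_⟩, fun E => Set.subset_sUnion_of_mem⟩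
  · rintro q ⟨E, hEC, hqE⟩
    exact (hC hEC).isMinimalIdempotent q hqE
  · exact (Set.pairwise_sUnion hchain.directedOn).mpr fun E hEC => (hC hEC).pairwise_mul_eq_zero

protected theorem insert {E : Set A} (hE : IsOrthogonalMinimalFamily E) {q : A}
    (hq : IsMinimalIdempotent q) (hEq : ∀ e ∈ E, e * q = 0) (hqE : ∀ e ∈ E, q * e = 0) :
    IsOrthogonalMinimalFamily (insert q E) where
  isMinimalIdempotent := Set.forall_mem_insert.mpr ⟨hq, hE.isMinimalIdempotent⟩
  pairwise_mul_eq_zero := Set.pairwise_insert.mpr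
    ⟨hE.pairwise_mul_eq_zero, fun e he _ => ⟨hqE e he, hEq e he⟩⟩

theorem sum_mul_of_mem {s : Finset A} (hs : IsOrthogonalMinimalFamily (s : Set A)) {e : A}
    (he : e ∈ s) : (∑ q ∈ s, q) * e = e := by
  rw [Finset.sum_mul, Finset.sum_eq_single_of_mem e he fun q hq hqe =>
    hs.pairwise_mul_eq_zero hq he hqe]
  exact (hs.isMinimalIdempotent e he).isIdempotentElem

theorem mul_sum_of_mem {s : Finset A} (hs : IsOrthogonalMinimalFamily (s : Set A)) {e : A}
    (he : e ∈ s) : e * ∑ q ∈ s, q = e := by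
  rw [Finset.mul_sum, Finset.sum_eq_single_of_mem e he fun q hq hqe =>
    hs.pairwise_mul_eq_zero he hq hqe.symm]
  exact (hs.isMinimalIdempotent e he).isIdempotentElem

end IsOrthogonalMinimalFamily

theorem IsMinimalIdempotent.sub_mul_of_mul_eq_zero {A : Type*} [Ring A] [Algebra ℂ A] {p q : A}
    (hq : IsMinimalIdempotent q) (hpq : p * q = 0) : IsMinimalIdempotent (q - q * p) := by
  have hmul_q : (q - q * p) * q = q := by
    rw [sub_mul, mul_assoc, hpq, mul_zero, sub_zero, hq.isIdempotentElem.eq]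
  refine ⟨?_, fun h => hq.ne_zero (by rw [← hmul_q, h, zero_mul]), fun x => ?_⟩
  · rw [IsIdempotentElem, mul_sub, ← mul_assoc, hmul_q]
  · obtain ⟨c, hc⟩ := hq.exists_mul_mul_eq_smul ((1 - p) * x)
    refine ⟨c, ?_⟩
    calc (q - q * p) * x * (q - q * p) = q * ((1 - p) * x) * q * (1 - p) := by noncomm_ring
      _ = c • (q - q * p) := by rw [hc, smul_mul_assoc, mul_sub, mul_one]

variable {A : Type*} [NormedRing A] [NormedAlgebra ℂ A] [CompleteSpace A]

theorem IsOrthogonalMinimalFamily.finite (hA : IsSpectrallySemisimple A)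
    (hclosed : IsClosed {a : A | spectralRank a < ⊤}) {E : Set A}
    (hE : IsOrthogonalMinimalFamily E) : E.Finite := by
  by_contra hinf
  let d : ℕ ↪ E := Set.Infinite.natEmbedding E hinf
  refine not_isClosed_setOf_spectralRank_lt_top hA (d := fun k => d k)
    (fun k => hE.isMinimalIdempotent _ (d k).2) (fun i j hij => ?_) hclosed
  exact hE.pairwise_mul_eq_zero (d i).2 (d j).2 (Subtype.coe_injective.ne (d.injective.ne hij))

theorem exists_isMinimalIdempotent_mul_eq_zero (hA : IsSpectrallySemisimple A) {p a : A}
    (hp : IsIdempotentElem p) (ha : spectralRank a < ⊤) (hpa : p * a ≠ a) :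
    ∃ q, IsMinimalIdempotent q ∧ p * q = 0 ∧ q * p = 0 := by
  have hb : spectralRank ((1 - p) * a) < ⊤ := (spectralRank_mul_le_right _ _).trans_lt ha
  have hb0 : (1 - p) * a ≠ 0 := by
    rw [sub_mul, one_mul]
    exact sub_ne_zero.mpr hpa.symm
  obtain ⟨q, x, hq, hqx⟩ := exists_isMinimalIdempotent_eq_mul hA hb0 hb
  have hpq : p * q = 0 := by
    rw [hqx, ← mul_assoc, ← mul_assoc, hp.mul_one_sub_self, zero_mul, zero_mul]
  refine ⟨q - q * p, hq.sub_mul_of_mul_eq_zero hpq, ?_, ?_⟩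
  · rw [mul_sub, ← mul_assoc, hpq, zero_mul, sub_zero]
  · rw [sub_mul, mul_assoc, hp.eq, sub_self]

theorem exists_forall_mul_eq_self (hA : IsSpectrallySemisimple A)
    (hclosed : IsClosed {a : A | spectralRank a < ⊤}) :
    ∃ p : A, spectralRank p < ⊤ ∧ ∀ a, spectralRank a < ⊤ → p * a = a := by
  obtain ⟨E, hE, hmax⟩ := IsOrthogonalMinimalFamily.exists_maximal A
  obtain ⟨s, rfl⟩ := (hE.finite hA hclosed).exists_finset_coe
  set p := ∑ q ∈ s, q with hp
  have hpp : IsIdempotentElem p := by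
    rw [IsIdempotentElem]
    nth_rw 2 [hp]
    rw [Finset.mul_sum]
    exact Finset.sum_congr rfl fun e he => hE.sum_mul_of_mem he
  refine ⟨p, ?_, fun a ha => ?_⟩
  · simpa using spectralRank_sum_mul_lt_top hA 1 hE.isMinimalIdempotent
  by_contra hne
  obtain ⟨q, hq, hpq, hqp⟩ := exists_isMinimalIdempotent_mul_eq_zero hA hpp ha hne
  have hsq (e : A) (he : e ∈ s) : e * q = 0 := by
    rw [← hE.mul_sum_of_mem he, mul_assoc, hpq, mul_zero]
  have hqs (e : A) (he : e ∈ s) : q * e = 0 := by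
    rw [← hE.sum_mul_of_mem he, ← mul_assoc, hqp, zero_mul]
  have hmem : q ∈ s := hmax (hE.insert hq hsq hqs) (Set.subset_insert q _) (Set.mem_insert q _)
  exact hq.ne_zero (by rw [← hE.sum_mul_of_mem hmem, hpq])

end LeftUnit

theorem stmt0 {A : Type*} [NormedRing A] [NormedAlgebra ℂ A] [CompleteSpace A]
    (hss : ∀ a : A, (∀ x : A, spectralRadius ℂ (x * a) = 0) → a = 0)
    (S : Set A) (hS : S = {a : A | spectralRank a < ⊤})
    (hclosed : IsClosed S) :
    ∃ n : ℕ, ∀ a ∈ S, spectralRank a ≤ (n : ℕ∞) := by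
  subst hS
  obtain ⟨p, hp, hunit⟩ := exists_forall_mul_eq_self hss hclosed
  refine ⟨(spectralRank p).toNat, fun a ha => ?_⟩
  calc spectralRank a = spectralRank (p * a) := by rw [hunit a ha]
    _ ≤ spectralRank p := spectralRank_mul_le_left p a
    _ = ((spectralRank p).toNat : ℕ∞) := (ENat.natCast_toNat hp.ne).symm
end

section
/- Let A be a semisimple unital complex Banach algebra and let S denote the set of finite-rank elements of A. If there exists a nonnegative integer n such that rank(a) ≤ n for every a ∈ S, then the ℂ-linear span of S is a finite-dimensional subspace of A. -/
open scoped ENNReal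

/-!
Let `X i` represent the isomorphism classes of simple left `A`-modules, and let `M = ⨁ i, X i`,
which is faithful because `A` is semisimple. By Schur's lemma and the Gelfand–Mazur theorem the
`A`-endomorphisms of `M` act by a scalar on each `X i`, so by Jacobson density `A` takes prescribed
values at linearly independent vectors chosen in the summands. In particular an element acting on
`M` with infinite-dimensional range has multiples with arbitrarily many nonzero eigenvalues.
Conversely, the Cayley–Hamilton theorem bounds the nonzero spectrum of `a` by the dimension of
`a • M`. The finite-rank elements are thus exactly those acting on `M` with finite-dimensional
range, and they form a two-sided ideal `I`.

On the summands not killed by `I` the values above can be prescribed by elements of `I`. If the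
ranks on `I` are at most `n`, no `n + 1` vectors from these summands are linearly independent, so
their sum `M'` is finite-dimensional, and `I` embeds into the linear endomorphisms of `M'`.
-/

section LinearAlgebra

theorem fg_iSup_of_forall_not_linearIndependent {K V ι : Type*} [DivisionRing K] [AddCommGroup V]
    [Module K V] (p : ι → Submodule K V) (N : ℕ)
    (h : ∀ (k : Fin N → ι) (v : Fin N → V), (∀ j, v j ∈ p (k j)) → ¬LinearIndependent K v) :
    (⨆ i, p i).FG := by
  obtain ⟨b, hbp, hspan, hli⟩ := exists_linearIndependent K (⋃ i, (p i : Set V))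
  rw [Submodule.iSup_eq_span, ← hspan]
  refine Submodule.fg_span (Set.not_infinite.mp fun hinf => ?_)
  have := hinf.to_subtype
  let e : Fin N ↪ b := Fin.valEmbedding.trans (Infinite.natEmbedding b)
  choose k hk using fun j => Set.mem_iUnion.mp (hbp (e j).2)
  exact h k (fun j => e j) hk (hli.comp e e.injective)

theorem exists_linearMap_apply_eq_of_linearIndependent {K V W κ : Type*} [DivisionRing K]
    [AddCommGroup V] [Module K V] [AddCommGroup W] [Module K W] {v : κ → V}
    (hv : LinearIndependent K v) (w : κ → W) : ∃ f : V →ₗ[K] W, ∀ j, f (v j) = w j := by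
  obtain ⟨f, hf⟩ := (Finsupp.linearCombination K w ∘ₗ hv.repr).exists_extend
  refine ⟨f, fun j => ?_⟩
  have hj := LinearMap.congr_fun hf ⟨v j, Submodule.subset_span ⟨j, rfl⟩⟩
  simpa [hv.repr_eq_single j ⟨v j, Submodule.subset_span ⟨j, rfl⟩⟩ rfl] using hj

theorem aeval_restrict_apply {R M : Type*} [CommRing R] [AddCommGroup M] [Module R M]
    (f : Module.End R M) {p : Submodule R M} (hp : ∀ x ∈ p, f x ∈ p) (q : Polynomial R) (x : p) :
    (Polynomial.aeval (f.restrict hp) q x : M) = Polynomial.aeval f q x := by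
  have hpow : ∀ n, (((f.restrict hp) ^ n) x : M) = (f ^ n) x := fun n => by
    rw [Module.End.pow_restrict n hp, LinearMap.coe_restrict_apply]
  simp only [Polynomial.aeval_eq_sum_range, LinearMap.sum_apply, LinearMap.smul_apply,
    AddSubmonoidClass.coe_finsetSum, SetLike.val_smul, hpow]

end LinearAlgebra

section Jacobson

theorem isUnit_add_one_of_mem_jacobson {R : Type*} [Ring R] {r : R} (hr : r ∈ Ring.jacobson R) :
    IsUnit (r + 1) := by
  have left_inv : ∀ {x : R}, x ∈ Ring.jacobson R → ∃ y, y * (x + 1) = 1 := fun {x} hx => by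
    rw [← Ideal.jacobson_bot] at hx
    obtain ⟨y, hy⟩ := Ideal.exists_mul_add_sub_mem_of_mem_jacobson x hx
    exact ⟨y, sub_eq_zero.mp hy⟩
  obtain ⟨s, hs⟩ := left_inv hr
  have hs' : -s * r + 1 = s := by rw [← hs]; noncomm_ring
  obtain ⟨t, ht⟩ := left_inv (Ideal.mul_mem_left _ (-s) hr)
  rw [hs'] at ht
  have htr : t = r + 1 := left_inv_eq_right_inv ht hs
  exact isUnit_iff_exists.mpr ⟨s, htr ▸ ht, hs⟩

theorem spectrum_subset_zero_of_mem_jacobson {K A : Type*} [Field K] [Ring A] [Algebra K A] {a : A}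
    (ha : a ∈ Ring.jacobson A) : spectrum K a ⊆ {0} := by
  intro l hl
  by_contra hl0
  lift l to Kˣ using IsUnit.mk0 l hl0
  refine hl ?_
  have hunit := isUnit_add_one_of_mem_jacobson
    (Ideal.mul_mem_left _ (algebraMap K A (-(l⁻¹ : Kˣ))) ha)
  have hfactor : algebraMap K A l - a =
      algebraMap K A l * (algebraMap K A (-(l⁻¹ : Kˣ)) * a + 1) := by
    rw [mul_add, mul_one, ← mul_assoc, ← map_mul, mul_neg, Units.mul_inv, map_neg, map_one]
    noncomm_ring
  rw [spectrum.mem_resolventSet_iff, hfactor]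
  exact (l.isUnit.map (algebraMap K A)).mul hunit

theorem jacobson_eq_bot_of_forall_spectralRadius_eq_zero {K A : Type*} [NormedField K] [Ring A]
    [Algebra K A] (h : ∀ a : A, (∀ x : A, spectralRadius K (x * a) = 0) → a = 0) :
    Ring.jacobson A = ⊥ := by
  refine (Submodule.eq_bot_iff _).mpr fun a ha => h a fun x => ?_
  have hspec := spectrum_subset_zero_of_mem_jacobson (K := K) (Ideal.mul_mem_left _ x ha)
  refine le_antisymm (iSup₂_le fun l hl => ?_) zero_le
  rw [Set.mem_singleton_iff.mp (hspec hl), nnnorm_zero, ENNReal.coe_zero]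

end Jacobson

section Spectrum

open Module Polynomial

variable {K A : Type*} [Field K] [Ring A] [Algebra K A]

theorem mem_spectrum_of_smul_eq {M : Type*} [AddCommGroup M] [Module K M] [Module A M]
    [IsScalarTower K A M] {a : A} {x : M} (hx : x ≠ 0) {c : K} (h : a • x = c • x) :
    c ∈ spectrum K a :=
  AlgHom.spectrum_apply_subset (Algebra.lsmul K K M) a
    (End.hasEigenvalue_of_hasEigenvector
      ⟨End.mem_eigenspace_iff.mpr h, hx⟩).mem_spectrum

theorem exists_mem_le_encard_spectrum [Infinite K] {N : ℕ} {X : Fin N → Type*}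
    [∀ j, AddCommGroup (X j)] [∀ j, Module K (X j)] [∀ j, Module A (X j)]
    [∀ j, IsScalarTower K A (X j)] {x : ∀ j, X j} (hx : ∀ j, x j ≠ 0) (s : Set A)
    (h : ∀ c : Fin N → K, ∃ b ∈ s, ∀ j, b • x j = c j • x j) :
    ∃ b ∈ s, (N : ℕ∞) ≤ (spectrum K b \ {0}).encard := by
  have := (Set.finite_singleton (0 : K)).infinite_compl.to_subtype
  let c : Fin N ↪ ({0}ᶜ : Set K) := Fin.valEmbedding.trans (Infinite.natEmbedding _)
  obtain ⟨b, hb, hbx⟩ := h fun j => c j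
  refine ⟨b, hb, ?_⟩
  have hsub : Set.range (fun j => (c j : K)) ⊆ spectrum K b \ {0} := by
    rintro _ ⟨j, rfl⟩
    exact ⟨mem_spectrum_of_smul_eq (hx j) (hbx j), (c j).2⟩
  have hinj : Function.Injective fun j => (c j : K) := Subtype.val_injective.comp c.injective
  have hcard : (Set.range fun j => (c j : K)).encard = N := by
    rw [← Set.image_univ, hinj.encard_image, Set.encard_univ, ENat.card_eq_coe_fintype_card,
      Fintype.card_fin]
  exact hcard ▸ Set.encard_le_encard hsub

theorem encard_spectrum_diff_zero_le_natDegree {a : A} {p : K[X]} (hp : p ≠ 0)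
    (hpa : aeval a (p * X) = 0) : (spectrum K a \ {0}).encard ≤ p.natDegree := by
  classical
  have hroots : spectrum K a \ {0} ⊆ (p.roots.toFinset : Set K) := by
    rintro l ⟨hl, hl0⟩
    have : Nontrivial A := not_subsingleton_iff_nontrivial.mp fun _ => by
      rw [spectrum.of_subsingleton] at hl
      exact hl
    have hmem : eval l (p * X) ∈ spectrum K (aeval a (p * X)) :=
      spectrum.subset_polynomial_aeval a _ ⟨l, hl, rfl⟩
    rw [hpa, spectrum.zero_eq, eval_mul, eval_X, Set.mem_singleton_iff] at hmem
    rw [Finset.mem_coe, Multiset.mem_toFinset, mem_roots hp]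
    exact (mul_eq_zero.mp hmem).resolve_right hl0
  calc (spectrum K a \ {0}).encard
    _ ≤ p.roots.toFinset.card := by
      simpa only [Set.encard_coe_eq_coe_finsetCard] using Set.encard_le_encard hroots
    _ ≤ p.natDegree := by
      exact_mod_cast (Multiset.toFinset_card_le _).trans (card_roots' _)

variable {M : Type*} [AddCommGroup M] [Module K M] [Module A M] [IsScalarTower K A M]

theorem encard_spectrum_diff_zero_le_finrank_range [FaithfulSMul A M] {a : A}
    (ha : (Algebra.lsmul K K M a).HasFiniteRange) :
    (spectrum K a \ {0}).encard ≤ finrank K (Algebra.lsmul K K M a).range := by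
  set f := Algebra.lsmul K K M a
  have := Module.Finite.of_fg ha
  have hf : ∀ x ∈ f.range, f x ∈ f.range := fun x _ => f.mem_range_self x
  have hzero : aeval a ((f.restrict hf).charpoly * X) = 0 := by
    refine FaithfulSMul.eq_of_smul_eq_smul (α := M) fun m => ?_
    have hcayley := aeval_restrict_apply f hf (f.restrict hf).charpoly ⟨f m, f.mem_range_self m⟩
    rw [LinearMap.aeval_self_charpoly, LinearMap.zero_apply, ZeroMemClass.coe_zero,
      aeval_algHom_apply] at hcayley
    rw [map_mul, aeval_X, mul_smul, zero_smul]
    exact hcayley.symm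
  exact (encard_spectrum_diff_zero_le_natDegree (LinearMap.charpoly_monic _).ne_zero hzero).trans_eq
    (congrArg _ (LinearMap.charpoly_natDegree _))

end Spectrum

section FiniteRange

open Module

variable (K A M : Type*) [Field K] [Ring A] [Algebra K A] [AddCommGroup M] [Module K M] [Module A M]
  [IsScalarTower K A M]

/-- The ideal of the elements of `A` whose action on the module `M` has finite-dimensional range
over `K`. For a suitable faithful semisimple `M` it consists of the elements of finite spectral
rank. -/
def finiteRangeIdeal : Ideal A where
  carrier := {a | (Algebra.lsmul K K M a).HasFiniteRange}
  zero_mem' := by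
    rw [Set.mem_ofPred_eq, map_zero]
    exact .zero
  add_mem' {a b} ha hb := by
    rw [Set.mem_ofPred_eq, map_add]
    exact .add ha hb
  smul_mem' a b hb := by
    rw [Set.mem_ofPred_eq, smul_eq_mul, map_mul]
    exact LinearMap.HasFiniteRange.comp_left hb _

variable {K A M}

theorem mem_finiteRangeIdeal {a : A} :
    a ∈ finiteRangeIdeal K A M ↔ (Algebra.lsmul K K M a).HasFiniteRange :=
  Iff.rfl

instance : (finiteRangeIdeal K A M).IsTwoSided where
  mul_mem_of_left b ha := by
    rw [mem_finiteRangeIdeal, map_mul]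
    exact (mem_finiteRangeIdeal.mp ha).comp_right _

theorem spectralRank_le_finrank_range [Algebra ℂ A] [Module ℂ M] [IsScalarTower ℂ A M]
    [FaithfulSMul A M] {a : A} (ha : a ∈ finiteRangeIdeal ℂ A M) :
    spectralRank a ≤ finrank ℂ (Algebra.lsmul ℂ ℂ M a).range := by
  have := Module.Finite.of_fg ha
  refine iSup_le fun x => ?_
  have hx : x * a ∈ finiteRangeIdeal ℂ A M := Ideal.mul_mem_left _ x ha
  refine (encard_spectrum_diff_zero_le_finrank_range hx).trans (Nat.cast_le.mpr ?_)
  rw [map_mul, End.mul_eq_comp, LinearMap.range_comp]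
  exact Submodule.finrank_map_le _ _

end FiniteRange

theorem exists_mem_smul_eq_of_smul_ne_zero {R M : Type*} [Ring R] [AddCommGroup M] [Module R M]
    [IsSimpleModule R M] {I : Ideal R} [I.IsTwoSided] {a : R} (ha : a ∈ I) {y : M} (hay : a • y ≠ 0)
    {x : M} (hx : x ≠ 0) (w : M) : ∃ b ∈ I, b • x = w := by
  obtain ⟨s, hs⟩ := IsSimpleModule.toSpanSingleton_surjective R hx y
  obtain ⟨t, ht⟩ := IsSimpleModule.toSpanSingleton_surjective R hay w
  rw [LinearMap.toSpanSingleton_apply] at hs ht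
  exact ⟨t * a * s, I.mul_mem_right _ (I.mul_mem_left t ha), by rw [mul_smul, mul_smul, hs, ht]⟩

/-- A family of pairwise nonisomorphic simple `A`-modules whose endomorphisms are all scalars from
`K`. On their direct sum, Jacobson density interpolates arbitrary `K`-linear operators that preserve
the summands. -/
structure IsSchurFamily (K A : Type*) [Field K] [Ring A] [Algebra K A] {ι : Type*} (X : ι → Type*)
    [∀ i, AddCommGroup (X i)] [∀ i, Module K (X i)] [∀ i, Module A (X i)]
    [∀ i, IsScalarTower K A (X i)] : Prop where
  isSimpleModule : ∀ i, IsSimpleModule A (X i)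
  isEmpty_linearEquiv : Pairwise fun i j => IsEmpty (X i ≃ₗ[A] X j)
  surjective_algebraMap_end : ∀ i, Function.Surjective (algebraMap K (Module.End A (X i)))

namespace IsSchurFamily

open Module

variable {K A ι : Type*} [Field K] [Ring A] [Algebra K A] {X : ι → Type*}
  [∀ i, AddCommGroup (X i)] [∀ i, Module K (X i)] [∀ i, Module A (X i)]
  [∀ i, IsScalarTower K A (X i)]

theorem comp (hX : IsSchurFamily K A X) {κ : Type*} {f : κ → ι} (hf : Function.Injective f) :
    IsSchurFamily K A fun k => X (f k) where
  isSimpleModule k := hX.isSimpleModule (f k)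
  isEmpty_linearEquiv _ _ hkl := hX.isEmpty_linearEquiv (hf.ne hkl)
  surjective_algebraMap_end k := hX.surjective_algebraMap_end (f k)

theorem exists_end_eq_mapRange (hX : IsSchurFamily K A X) (e : End A (Π₀ i, X i)) :
    ∃ c : ι → K, e = DFinsupp.mapRange.linearMap fun i => algebraMap K (End A (X i)) (c i) := by
  classical
  have := hX.isSimpleModule
  choose c hc using fun i => hX.surjective_algebraMap_end i
    (DFinsupp.lapply i ∘ₗ e ∘ₗ DFinsupp.lsingle i)
  refine ⟨c, DFinsupp.lhom_ext' fun i => LinearMap.ext fun x => DFinsupp.ext fun j => ?_⟩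
  obtain rfl | hij := eq_or_ne i j
  · simpa using (LinearMap.congr_fun (hc i) x).symm
  · let f : X i →ₗ[A] X j := DFinsupp.lapply j ∘ₗ e ∘ₗ DFinsupp.lsingle i
    have hf : f = 0 := f.bijective_or_eq_zero.resolve_left fun hbij =>
      (hX.isEmpty_linearEquiv hij).false (.ofBijective f hbij)
    simpa [hij, f] using LinearMap.congr_fun hf x

theorem exists_smul_eq_mapRange (hX : IsSchurFamily K A X) (T : ∀ i, X i →ₗ[K] X i)
    (s : Finset (Π₀ i, X i)) : ∃ r : A, ∀ m ∈ s, r • m = DFinsupp.mapRange.linearMap T m := by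
  have := hX.isSimpleModule
  let F : End (End A (Π₀ i, X i)) (Π₀ i, X i) :=
    { toFun := DFinsupp.mapRange.linearMap T
      map_add' := map_add _
      map_smul' := fun e m => by
        obtain ⟨c, rfl⟩ := hX.exists_end_eq_mapRange e
        ext i
        simp }
  obtain ⟨r, hr⟩ := jacobson_density F s
  exact ⟨r, fun m hm => (hr m hm).symm⟩

theorem exists_smul_eq [DecidableEq ι] (hX : IsSchurFamily K A X) {κ : Type*} [Finite κ]
    {k : κ → ι} {x : ∀ j, X (k j)}
    (hx : LinearIndependent K fun j => DFinsupp.single (k j) (x j)) (w : ∀ j, X (k j)) :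
    ∃ r : A, ∀ j, r • x j = w j := by
  classical
  have := Fintype.ofFinite κ
  obtain ⟨L, hL⟩ := exists_linearMap_apply_eq_of_linearIndependent hx
    fun j => DFinsupp.single (k j) (w j)
  obtain ⟨r, hr⟩ := hX.exists_smul_eq_mapRange
    (fun i => DFinsupp.lapply i ∘ₗ L ∘ₗ DFinsupp.lsingle i)
    (Finset.univ.image fun j => DFinsupp.single (k j) (x j))
  refine ⟨r, fun j => ?_⟩
  have hj := DFunLike.congr_fun (hr _ (Finset.mem_image_of_mem _ (Finset.mem_univ j))) (k j)
  simpa [hL] using hj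

theorem exists_mem_smul_eq [DecidableEq ι] (hX : IsSchurFamily K A X) {κ : Type*} [Finite κ]
    {k : κ → ι} {x : ∀ j, X (k j)}
    (hx : LinearIndependent K fun j => DFinsupp.single (k j) (x j)) {I : Ideal A} [I.IsTwoSided]
    (hI : ∀ j, ∃ a ∈ I, ∃ y : X (k j), a • y ≠ 0) (w : ∀ j, X (k j)) :
    ∃ b ∈ I, ∀ j, b • x j = w j := by
  classical
  have := Fintype.ofFinite κ
  have := hX.isSimpleModule
  have hx0 : ∀ j, x j ≠ 0 := fun j => mt DFinsupp.single_eq_zero.mpr (hx.ne_zero j)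
  choose a haI y hay using hI
  choose b hbI hb using fun j => exists_mem_smul_eq_of_smul_ne_zero (haI j) (hay j) (hx0 j) (w j)
  choose e he using fun j => hX.exists_smul_eq hx (Pi.single j (x j))
  refine ⟨∑ j, b j * e j, I.sum_mem fun j _ => I.mul_mem_right _ (hbI j), fun l => ?_⟩
  rw [Finset.sum_smul, Finset.sum_eq_single_of_mem l (Finset.mem_univ l), mul_smul, he,
    Pi.single_eq_same, hb]
  intro j _ hjl
  rw [mul_smul, he, Pi.single_eq_of_ne' hjl, smul_zero]

variable [Infinite K]

theorem finite_dfinsupp_of_forall_mem_encard_spectrum_le (hX : IsSchurFamily K A X) {I : Ideal A}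
    [I.IsTwoSided] (hI : ∀ i, ∃ a ∈ I, ∃ y : X i, a • y ≠ 0) {n : ℕ}
    (hn : ∀ b ∈ I, (spectrum K b \ {0}).encard ≤ n) : Module.Finite K (Π₀ i, X i) := by
  classical
  rw [Module.finite_def, ← DFinsupp.iSup_range_lsingle]
  refine fg_iSup_of_forall_not_linearIndependent _ (n + 1) fun k v hv hli => ?_
  choose x hx using hv
  obtain rfl : (fun j => DFinsupp.single (k j) (x j)) = v := funext hx
  obtain ⟨b, hb, hle⟩ := exists_mem_le_encard_spectrum
    (fun j => mt DFinsupp.single_eq_zero.mpr (hli.ne_zero j)) (I : Set A)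
    fun c : Fin (n + 1) → K => hX.exists_mem_smul_eq hli (fun j => hI (k j)) fun j => c j • x j
  exact (ENat.natCast_le_natCast.mp (hle.trans (hn b hb))).not_gt n.lt_succ_self

theorem mem_finiteRangeIdeal_of_forall_encard_spectrum_le (hX : IsSchurFamily K A X) {a : A} {n : ℕ}
    (hn : ∀ r : A, (spectrum K (r * a) \ {0}).encard ≤ n) :
    a ∈ finiteRangeIdeal K A (Π₀ i, X i) := by
  classical
  rw [mem_finiteRangeIdeal, LinearMap.hasFiniteRange_iff_range, LinearMap.range_eq_map,
    ← DFinsupp.iSup_range_lsingle, Submodule.map_iSup]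
  refine fg_iSup_of_forall_not_linearIndependent _ (n + 1) fun k v hv hli => ?_
  have hv' : ∀ j, ∃ y : X (k j), DFinsupp.single (k j) (a • y) = v j := fun j => by
    obtain ⟨_, ⟨y, rfl⟩, hy⟩ := hv j
    exact ⟨y, by rw [← hy]; simp⟩
  choose y hy using hv'
  obtain rfl : (fun j => DFinsupp.single (k j) (a • y j)) = v := funext hy
  have hy0 : ∀ j, y j ≠ 0 := fun j h0 => hli.ne_zero j (by simp [h0])
  obtain ⟨_, ⟨r, rfl⟩, hle⟩ := exists_mem_le_encard_spectrum hy0 (Set.range (· * a))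
    fun c : Fin (n + 1) → K => by
    obtain ⟨r, hr⟩ := hX.exists_smul_eq hli fun j => c j • y j
    exact ⟨r * a, ⟨r, rfl⟩, fun j => by rw [mul_smul, hr]⟩
  exact (ENat.natCast_le_natCast.mp (hle.trans (hn r))).not_gt n.lt_succ_self

theorem finiteDimensional_of_forall_mem_encard_spectrum_le [FaithfulSMul A (Π₀ i, X i)]
    (hX : IsSchurFamily K A X) {I : Ideal A} [I.IsTwoSided] {n : ℕ}
    (hn : ∀ b ∈ I, (spectrum K b \ {0}).encard ≤ n) :
    FiniteDimensional K (I.restrictScalars K) := by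
  classical
  let κ := {i // ∃ a ∈ I, ∃ y : X i, a • y ≠ 0}
  have hκ : IsSchurFamily K A fun i : κ => X i := hX.comp Subtype.val_injective
  have := hκ.finite_dfinsupp_of_forall_mem_encard_spectrum_le (fun i => i.2) hn
  let θ : I.restrictScalars K →ₗ[K] End K (Π₀ i : κ, X i) :=
    (Algebra.lsmul K K (Π₀ i : κ, X i)).toLinearMap.domRestrict _
  refine Module.Finite.of_injective θ ((injective_iff_map_eq_zero θ).mpr fun ⟨a, ha⟩ hθ => ?_)
  refine Subtype.ext (FaithfulSMul.eq_of_smul_eq_smul (α := Π₀ i, X i) fun m => ?_)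
  ext i
  rw [DFinsupp.smul_apply, ZeroMemClass.coe_zero, zero_smul, DFinsupp.zero_apply]
  by_contra hne
  let j : κ := ⟨i, a, ha, m i, hne⟩
  have hj := DFunLike.congr_fun (LinearMap.congr_fun hθ (DFinsupp.single j (m i))) j
  exact hne (by simpa [θ, j] using hj)

theorem spectralRank_lt_top_iff_mem_finiteRangeIdeal [Algebra ℂ A] [∀ i, Module ℂ (X i)]
    [∀ i, IsScalarTower ℂ A (X i)] [FaithfulSMul A (Π₀ i, X i)] (hX : IsSchurFamily ℂ A X) {a : A} :
    spectralRank a < ⊤ ↔ a ∈ finiteRangeIdeal ℂ A (Π₀ i, X i) := by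
  refine ⟨fun ha => ?_, fun ha => (spectralRank_le_finrank_range ha).trans_lt
    (ENat.natCast_lt_top _)⟩
  obtain ⟨n, hn⟩ := ENat.ne_top_iff_exists.mp ha.ne
  exact hX.mem_finiteRangeIdeal_of_forall_encard_spectrum_le (iSup_le_iff.mp hn.ge)

end IsSchurFamily

section MaximalIdeals

theorem exists_isMaximal_representatives (R : Type*) [Ring R] : ∃ s : Set (Ideal R),
    (∀ m ∈ s, m.IsMaximal) ∧ (s.Pairwise fun m m' => IsEmpty ((R ⧸ m) ≃ₗ[R] R ⧸ m')) ∧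
      ∀ m : Ideal R, m.IsMaximal → ∃ m' ∈ s, Nonempty ((R ⧸ m) ≃ₗ[R] R ⧸ m') := by
  let iso : Setoid {m : Ideal R // m.IsMaximal} :=
    { r := fun m m' => Nonempty ((R ⧸ m.1) ≃ₗ[R] R ⧸ m'.1)
      iseqv := ⟨fun _ => ⟨.refl R _⟩, fun ⟨e⟩ => ⟨e.symm⟩, fun ⟨e⟩ ⟨e'⟩ => ⟨e.trans e'⟩⟩ }
  refine ⟨Set.range fun q : Quotient iso => q.out.1, ?_, ?_, fun m hm => ?_⟩
  · rintro _ ⟨q, rfl⟩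
    exact q.out.2
  · rintro _ ⟨q, rfl⟩ _ ⟨q', rfl⟩ hne
    refine ⟨fun e => hne ?_⟩
    exact congrArg (fun q => q.out.1) (Quotient.out_equiv_out.mp (show iso _ _ from ⟨e⟩))
  · exact ⟨_, ⟨Quotient.mk iso ⟨m, hm⟩, rfl⟩, Setoid.symm (Quotient.mk_out (s := iso) ⟨m, hm⟩)⟩

theorem faithfulSMul_dfinsupp_of_jacobson_eq_bot {R : Type*} [Ring R] (hR : Ring.jacobson R = ⊥)
    {ι : Type*} {X : ι → Type*} [∀ i, AddCommGroup (X i)] [∀ i, Module R (X i)]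
    (hX : ∀ m : Ideal R, m.IsMaximal → ∃ i, Nonempty ((R ⧸ m) ≃ₗ[R] X i)) :
    FaithfulSMul R (Π₀ i, X i) := by
  rw [← Module.annihilator_eq_bot, Module.annihilator_dfinsupp, ← le_bot_iff, ← hR,
    Ring.jacobson_eq_sInf_isMaximal]
  refine le_sInf fun m hm a ha => ?_
  obtain ⟨i, ⟨e⟩⟩ := hX m hm
  have hai : a ∈ Module.annihilator R (R ⧸ m) :=
    e.annihilator_eq ▸ (Submodule.mem_iInf _).mp ha i
  have hmk := Module.mem_annihilator.mp hai (Submodule.Quotient.mk 1)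
  rwa [← Submodule.Quotient.mk_smul, smul_eq_mul, mul_one, Submodule.Quotient.mk_eq_zero] at hmk

end MaximalIdeals

theorem surjective_algebraMap_end_quotient_of_isMaximal {A : Type*} [NormedRing A]
    [NormedAlgebra ℂ A] [CompleteSpace A] (m : Ideal A) [hm : m.IsMaximal] :
    Function.Surjective (algebraMap ℂ (Module.End A (A ⧸ m))) := by
  intro e
  have : IsClosed (m : Set A) := Ideal.IsMaximal.isClosed
  have : IsSimpleModule A (A ⧸ m) := isSimpleModule_iff_isCoatom.mpr hm.1
  have := IsSimpleModule.nontrivial A (A ⧸ m)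
  let E : (A ⧸ m) →L[ℂ] A ⧸ m := ⟨e.restrictScalars ℂ, IsModuleTopology.continuous_of_linearMap e⟩
  obtain ⟨c, hc⟩ := spectrum.nonempty E
  let g : Module.End A (A ⧸ m) := algebraMap ℂ _ c - e
  have hg : ¬Function.Bijective g := fun hbij => hc <| by
    rw [spectrum.mem_resolventSet_iff, ContinuousLinearMap.isUnit_iff_bijective]
    exact hbij
  exact ⟨c, sub_eq_zero.mp (g.bijective_or_eq_zero.resolve_left hg)⟩

theorem stmt1_general {A : Type*} [Ring A] [Algebra ℂ A] (hJ : Ring.jacobson A = ⊥)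
    (hSchur : ∀ m : Ideal A, m.IsMaximal →
      Function.Surjective (algebraMap ℂ (Module.End A (A ⧸ m))))
    (n : ℕ) (hbound : ∀ a : A, spectralRank a < ⊤ → spectralRank a ≤ n) :
    FiniteDimensional ℂ (Submodule.span ℂ {a : A | spectralRank a < ⊤}) := by
  obtain ⟨s, hmax, hne, hrep⟩ := exists_isMaximal_representatives A
  have hX : IsSchurFamily ℂ A fun m : s => A ⧸ (m : Ideal A) :=
    { isSimpleModule m := isSimpleModule_iff_isCoatom.mpr (hmax m m.2).1
      isEmpty_linearEquiv m m' h := hne m.2 m'.2 (Subtype.coe_ne_coe.mpr h)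
      surjective_algebraMap_end m := hSchur m (hmax m m.2) }
  have := faithfulSMul_dfinsupp_of_jacobson_eq_bot (X := fun m : s => A ⧸ (m : Ideal A)) hJ
    fun m hm => let ⟨m', hm', e⟩ := hrep m hm; ⟨⟨m', hm'⟩, e⟩
  set I := finiteRangeIdeal ℂ A (Π₀ m : s, A ⧸ (m : Ideal A))
  have hI : {a : A | spectralRank a < ⊤} = I.restrictScalars ℂ :=
    Set.ext fun a => hX.spectralRank_lt_top_iff_mem_finiteRangeIdeal
  rw [hI, Submodule.span_eq]
  refine hX.finiteDimensional_of_forall_mem_encard_spectrum_le (n := n) fun b hb => ?_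
  have hb' := hbound b (hX.spectralRank_lt_top_iff_mem_finiteRangeIdeal.mpr hb)
  simpa only [one_mul] using iSup_le_iff.mp hb' 1

theorem stmt1 {A : Type*} [NormedRing A] [NormedAlgebra ℂ A] [CompleteSpace A]
    (hss : ∀ a : A, (∀ x : A, spectralRadius ℂ (x * a) = 0) → a = 0)
    (S : Set A) (hS : S = {a : A | spectralRank a < ⊤})
    (n : ℕ) (hbound : ∀ a ∈ S, spectralRank a ≤ (n : ℕ∞)) :
    FiniteDimensional ℂ (Submodule.span ℂ S) := by
  subst hS
  exact stmt1_general (jacobson_eq_bot_of_forall_spectralRadius_eq_zero hss)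
    (fun m _ => surjective_algebraMap_end_quotient_of_isMaximal m) n hbound
end

section
/- Let A be a semisimple unital complex Banach algebra, let p ∈ A be a rank-one projection (an idempotent with rank(p) = 1), and let x ∈ A be arbitrary. Then the element q = p + p·x − p·x·p is a nonzero idempotent with rank(q) = 1. -/
open scoped ENNReal

/-!
The element `q = p + p * x - p * x * p` satisfies `p * q = q` and `q * p = p`: it generates the
same right ideal as `p`, and any such `q` is idempotent. The spectral rank depends only on the
right ideal generated, because the spectra of `y * (a * c)` and `(c * y) * a` agree away from `0`.
-/

section Idempotent

theorem isIdempotentElem_of_mul_eq_right {S : Type*} [Semigroup S] {p q : S}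
    (hpq : p * q = q) (hqp : q * p = p) : IsIdempotentElem q :=
  calc
    q * q = q * p * q := by rw [mul_assoc, hpq]
    _ = q := by rw [hqp, hpq]

variable {R : Type*} [NonUnitalRing R] {p : R}

theorem mul_add_mul_sub_mul_mul_eq_right (hp : IsIdempotentElem p) (x : R) :
    p * (p + p * x - p * x * p) = p + p * x - p * x * p := by
  simp only [mul_sub, mul_add, ← mul_assoc, hp.eq]

theorem add_mul_sub_mul_mul_mul_eq_right (hp : IsIdempotentElem p) (x : R) :
    (p + p * x - p * x * p) * p = p := by
  simp only [sub_mul, add_mul, mul_assoc, hp.eq, add_sub_cancel_right]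

end Idempotent

section SpectralRank

variable {A : Type*} [Ring A] [Algebra ℂ A] {a b : A}

theorem spectralRank_zero : spectralRank (0 : A) = 0 := by
  cases subsingleton_or_nontrivial A <;> simp [spectralRank]

theorem ne_zero_of_spectralRank_ne_zero (ha : spectralRank a ≠ 0) : a ≠ 0 := by
  rintro rfl
  exact ha spectralRank_zero

theorem spectralRank_mul_right_le (a c : A) : spectralRank (a * c) ≤ spectralRank a :=
  iSup_le fun y =>
    calc
      (spectrum ℂ (y * (a * c)) \ {0}).encard = (spectrum ℂ (c * y * a) \ {0}).encard := by
        rw [← mul_assoc, spectrum.nonzero_mul_comm, mul_assoc]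
      _ ≤ spectralRank a := le_iSup (fun z => (spectrum ℂ (z * a) \ {0}).encard) (c * y)

theorem spectralRank_le_of_dvd (h : a ∣ b) : spectralRank b ≤ spectralRank a := by
  obtain ⟨c, rfl⟩ := h
  exact spectralRank_mul_right_le a c

theorem spectralRank_eq_of_dvd_dvd (hab : a ∣ b) (hba : b ∣ a) :
    spectralRank a = spectralRank b :=
  le_antisymm (spectralRank_le_of_dvd hba) (spectralRank_le_of_dvd hab)

end SpectralRank

theorem stmt8_general {A : Type*} [Ring A] [Algebra ℂ A] {p : A} (hp : IsIdempotentElem p)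
    (x : A) :
    (p + p * x - p * x * p = 0 ↔ p = 0) ∧
    IsIdempotentElem (p + p * x - p * x * p) ∧
    spectralRank (p + p * x - p * x * p) = spectralRank p := by
  have hpq := mul_add_mul_sub_mul_mul_eq_right hp x
  have hqp := add_mul_sub_mul_mul_mul_eq_right hp x
  have p_dvd_q : p ∣ p + p * x - p * x * p := Dvd.intro _ hpq
  have q_dvd_p : p + p * x - p * x * p ∣ p := Dvd.intro _ hqp
  exact ⟨⟨fun hq => zero_dvd_iff.mp (hq ▸ q_dvd_p), fun h0 => zero_dvd_iff.mp (h0 ▸ p_dvd_q)⟩,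
    isIdempotentElem_of_mul_eq_right hpq hqp,
    spectralRank_eq_of_dvd_dvd q_dvd_p p_dvd_q⟩

theorem stmt8 {A : Type*} [NormedRing A] [NormedAlgebra ℂ A] [CompleteSpace A]
    (hss : ∀ a : A, (∀ x : A, spectralRadius ℂ (x * a) = 0) → a = 0)
    (p x : A) (hp : p * p = p) (hrank : spectralRank p = 1) :
    p + p * x - p * x * p ≠ 0 ∧
    (p + p * x - p * x * p) * (p + p * x - p * x * p) = p + p * x - p * x * p ∧
    spectralRank (p + p * x - p * x * p) = 1 := by
  obtain ⟨hzero, hidem, heq⟩ := stmt8_general hp x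
  exact ⟨hzero.not.mpr (ne_zero_of_spectralRank_ne_zero (by simp [hrank])), hidem, heq.trans hrank⟩
end

section
/- Let A be a semisimple unital complex Banach algebra and let p, r ∈ A be minimal projections, i.e. nonzero idempotents such that for every x ∈ A there exist λ, μ ∈ ℂ with p·x·p = λ·p and r·x·r = μ·r. If p belongs to the two-sided ideal J_r generated by r, then r belongs to the two-sided ideal J_p generated by p; consequently J_r = J_p. -/
/-- The two-sided ideal generated by `p`: all finite sums `∑ xⱼ·p·yⱼ`. -/
def idealGen {A : Type*} [Ring A] (p : A) : Set A :=
  {a : A | ∃ (n : ℕ) (x y : Fin n → A), a = ∑ j, x j * p * y j}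

/-!
Write `J_a` for the ideal generated by `a`. If every element `r * y * p * x * r` vanished, then
`J_r * p * J_r` would vanish too; but it contains `p * p * p`, as `p ∈ J_r`. By minimality of `r`,
a nonzero element `r * y * p * x * r` of `J_p` has `r` as a right multiple, so `r ∈ J_p`.
-/

section Ring

variable {A : Type*} [Ring A] {a b c p r : A}

theorem sum_mul_mul_mem_idealGen {ι : Type*} [Fintype ι] (p : A) (x y : ι → A) :
    ∑ i, x i * p * y i ∈ idealGen p :=
  let e := (Fintype.equivFin ι).symm
  ⟨Fintype.card ι, x ∘ e, y ∘ e, (e.sum_comp fun i ↦ x i * p * y i).symm⟩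

theorem mul_mul_mem_idealGen (x p y : A) : x * p * y ∈ idealGen p := by
  simpa using sum_mul_mul_mem_idealGen p (fun _ : Unit ↦ x) fun _ ↦ y

theorem idealGen_subset_idealGen (h : a ∈ idealGen b) : idealGen a ⊆ idealGen b := by
  obtain ⟨m, x, y, rfl⟩ := h
  rintro _ ⟨n, u, v, rfl⟩
  have flatten : ∑ i, u i * (∑ j, x j * b * y j) * v i
      = ∑ k : Fin n × Fin m, u k.1 * x k.2 * b * (y k.2 * v k.1) := by
    simp only [Fintype.sum_prod_type, Finset.mul_sum, Finset.sum_mul, mul_assoc]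
  rw [flatten]
  exact sum_mul_mul_mem_idealGen b _ _

theorem mul_mul_eq_zero_of_mem_idealGen (ha : a ∈ idealGen r) (hb : b ∈ idealGen r)
    (h : ∀ y x, r * (y * c * x) * r = 0) : a * c * b = 0 := by
  obtain ⟨m, u, y, rfl⟩ := ha
  obtain ⟨n, x, v, rfl⟩ := hb
  have term_eq_zero (i : Fin m) (j : Fin n) : u i * r * y i * c * (x j * r * v j) = 0 := by
    calc u i * r * y i * c * (x j * r * v j)
        = u i * (r * (y i * c * x j) * r) * v j := by simp only [mul_assoc]
      _ = 0 := by rw [h, mul_zero, zero_mul]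
  simp only [Finset.sum_mul, Finset.mul_sum, term_eq_zero, Finset.sum_const_zero]

theorem mem_idealGen_of_mul_mul_ne_zero
    (hr : ∀ x, r * x * r ≠ 0 → ∃ z, r * x * r * z = r)
    (ha : a ∈ idealGen r) (hb : b ∈ idealGen r) (h : a * c * b ≠ 0) : r ∈ idealGen c := by
  obtain ⟨y, x, hyx⟩ : ∃ y x, r * (y * c * x) * r ≠ 0 := by
    contrapose! h
    exact mul_mul_eq_zero_of_mem_idealGen ha hb h
  obtain ⟨z, hz⟩ := hr _ hyx
  have r_eq : r * y * c * (x * r * z) = r := by simpa only [mul_assoc] using hz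
  simpa only [r_eq] using mul_mul_mem_idealGen (r * y) c (x * r * z)

theorem stmt11_general (hr : ∀ x, r * x * r ≠ 0 → ∃ z, r * x * r * z = r)
    (hp : p ^ 3 ≠ 0) (hmem : p ∈ idealGen r) :
    r ∈ idealGen p ∧ idealGen r = idealGen p := by
  have hrp : r ∈ idealGen p :=
    mem_idealGen_of_mul_mul_ne_zero hr hmem hmem (pow_three' p ▸ hp)
  exact ⟨hrp, (idealGen_subset_idealGen hrp).antisymm (idealGen_subset_idealGen hmem)⟩

end Ring

theorem exists_mul_eq_of_eq_smul {K A : Type*} [Field K] [Ring A] [Algebra K A] {a r : A}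
    (h : ∃ μ : K, a = μ • r) (ha : a ≠ 0) : ∃ z, a * z = r := by
  obtain ⟨μ, rfl⟩ := h
  have hμ : μ ≠ 0 := left_ne_zero_of_smul ha
  exact ⟨μ⁻¹ • 1, by rw [mul_smul_comm, mul_one, inv_smul_smul₀ hμ]⟩

theorem stmt11 {A : Type*} [NormedRing A] [NormedAlgebra ℂ A] [CompleteSpace A]
    (hss : ∀ a : A, (∀ x : A, spectralRadius ℂ (x * a) = 0) → a = 0)
    (p r : A)
    (hp0 : p ≠ 0) (hp : p * p = p) (hpmin : ∀ x : A, ∃ lam : ℂ, p * x * p = lam • p)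
    (hr0 : r ≠ 0) (hr : r * r = r) (hrmin : ∀ x : A, ∃ mu : ℂ, r * x * r = mu • r)
    (hmem : p ∈ idealGen r) :
    r ∈ idealGen p ∧ idealGen r = idealGen p :=
  stmt11_general (fun x ↦ exists_mul_eq_of_eq_smul (hrmin x)) (by rwa [pow_three', hp, hp]) hmem
end

section
/- Let n ≥ 1 and let f : M_n(ℂ) → ℂ be a linear functional on the algebra of n × n complex matrices. Then the following are equivalent: (a) there exists α ∈ ℂ such that f(a) = α · Tr(a) for all a; (b) f(a) = 0 for every nilpotent matrix a ∈ M_n(ℂ); (c) f(a) = 0 for every matrix a ∈ M_n(ℂ) with a² = 0. -/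
/-!
A rank-one matrix `u vᵀ` with `v ⬝ᵥ u = 0` squares to zero. Taking `u = eᵢ`, `v = eⱼ` shows that a
functional vanishing on square-zero matrices kills the off-diagonal matrix units, and taking
`u = eᵢ - eⱼ`, `v = eᵢ + eⱼ` then shows that it takes the same value on all diagonal ones, so that
it is a multiple of the trace. Conversely, the trace of a nilpotent matrix is nilpotent, hence zero
over a reduced ring.
-/

open Matrix

variable {ι R M : Type*} [Fintype ι] [DecidableEq ι]

theorem vecMulVec_sq_eq_zero [Semiring R] {u v : ι → R} (hvu : v ⬝ᵥ u = 0) :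
    vecMulVec u v ^ 2 = 0 := by
  rw [sq, vecMulVec_mul_vecMulVec, hvu, zero_smul, vecMulVec_zero]

theorem map_eq_trace_smul_of_map_single [Semiring R] [AddCommMonoid M] [Module R M]
    {f : Matrix ι ι R →ₗ[R] M} {m : M} (hne : ∀ i j, i ≠ j → f (single i j 1) = 0)
    (hself : ∀ i, f (single i i 1) = m) (a : Matrix ι ι R) :
    f a = trace a • m := by
  suffices f = (traceLinearMap ι R R).smulRight m from LinearMap.congr_fun this a
  refine ext_linearMap R fun i j => LinearMap.ext_ring ?_
  obtain rfl | hij := eq_or_ne i j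
  · simp [hself]
  · simp [hne i j hij, trace_single_eq_of_ne i j _ hij]

section Ring

variable [Ring R] [AddCommGroup M] [Module R M] {f : Matrix ι ι R →ₗ[R] M}

theorem map_single_eq_zero_of_ne (hf : ∀ a, a ^ 2 = 0 → f a = 0) {i j : ι} (hij : i ≠ j) :
    f (single i j 1) = 0 := by
  rw [single_eq_single_vecMulVec_single]
  exact hf _ (vecMulVec_sq_eq_zero (by simp [hij.symm]))

theorem map_single_self_eq_map_single_self (hf : ∀ a, a ^ 2 = 0 → f a = 0) (i j : ι) :
    f (single i i 1) = f (single j j 1) := by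
  obtain rfl | hij := eq_or_ne i j
  · rfl
  let u : ι → R := Pi.single i 1 - Pi.single j 1
  let v : ι → R := Pi.single i 1 + Pi.single j 1
  have hvu : v ⬝ᵥ u = 0 := by simp [u, v, hij, hij.symm]
  have huv : vecMulVec u v = single i i 1 + single i j 1 - (single j i 1 + single j j 1) := by
    simp only [u, v, sub_vecMulVec, vecMulVec_add, single_eq_single_vecMulVec_single]
    abel
  have hfuv : f (vecMulVec u v) = 0 := hf _ (vecMulVec_sq_eq_zero hvu)
  rw [huv, map_sub, map_add, map_add, map_single_eq_zero_of_ne hf hij,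
    map_single_eq_zero_of_ne hf hij.symm, add_zero, zero_add] at hfuv
  exact sub_eq_zero.mp hfuv

theorem exists_map_eq_trace_smul (hf : ∀ a, a ^ 2 = 0 → f a = 0) :
    ∃ m : M, ∀ a, f a = trace a • m := by
  obtain _ | ⟨⟨i⟩⟩ := isEmpty_or_nonempty ι
  · exact ⟨0, map_eq_trace_smul_of_map_single isEmptyElim isEmptyElim⟩
  · exact ⟨f (single i i 1), map_eq_trace_smul_of_map_single
      (fun _ _ => map_single_eq_zero_of_ne hf)
      (fun j => map_single_self_eq_map_single_self hf j i)⟩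

end Ring

theorem stmt13_general [CommRing R] [IsReduced R] [AddCommGroup M] [Module R M]
    (f : Matrix ι ι R →ₗ[R] M) :
    ((∃ m : M, ∀ a, f a = trace a • m) ↔ (∀ a, IsNilpotent a → f a = 0)) ∧
    ((∀ a, IsNilpotent a → f a = 0) ↔ (∀ a, a ^ 2 = 0 → f a = 0)) := by
  have vanish_of_trace : (∃ m : M, ∀ a, f a = trace a • m) → ∀ a, IsNilpotent a → f a = 0 := by
    rintro ⟨m, hm⟩ a ha
    rw [hm, (isNilpotent_trace_of_isNilpotent ha).eq_zero, zero_smul]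
  have vanish_sq_zero (h : ∀ a, IsNilpotent a → f a = 0) (a : Matrix ι ι R) (ha : a ^ 2 = 0) :
      f a = 0 :=
    h a ⟨2, ha⟩
  exact ⟨⟨vanish_of_trace, fun h => exists_map_eq_trace_smul (vanish_sq_zero h)⟩,
    ⟨vanish_sq_zero, fun h => vanish_of_trace (exists_map_eq_trace_smul h)⟩⟩

theorem stmt13 (n : ℕ) (hn : 1 ≤ n) (f : Matrix (Fin n) (Fin n) ℂ →ₗ[ℂ] ℂ) :
    ((∃ α : ℂ, ∀ a : Matrix (Fin n) (Fin n) ℂ, f a = α * Matrix.trace a) ↔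
      (∀ a : Matrix (Fin n) (Fin n) ℂ, IsNilpotent a → f a = 0)) ∧
    ((∀ a : Matrix (Fin n) (Fin n) ℂ, IsNilpotent a → f a = 0) ↔
      (∀ a : Matrix (Fin n) (Fin n) ℂ, a ^ 2 = 0 → f a = 0)) := by
  simpa only [smul_eq_mul, mul_comm] using stmt13_general f
end

section
/- Let X be a complex Banach space and let P, Q be rank-one projections in B(X), i.e. continuous linear operators on X with P² = P, Q² = Q and whose ranges are one-dimensional. Then there exist continuous linear operators S, T on X, each with one-dimensional range, such that P − Q = S∘T − T∘S. -/
/-!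
A continuous operator of rank one has the form `f ⊗ x : z ↦ f z • x`, with `f` continuous because
coordinates on a finite-dimensional Hausdorff space are, and it is a projection exactly when
`f x = 1`. Since `(g ⊗ x) ∘ (f ⊗ y) = g y • (f ⊗ x)`, two rank-one projections `f ⊗ x` and `g ⊗ y`
are the two products, in either order, of `g ⊗ x` and `f ⊗ y`.
-/

open ContinuousLinearMap Module

section SmulRight

variable {𝕜 X Y : Type*} [DivisionRing 𝕜] [TopologicalSpace 𝕜]
  [AddCommGroup X] [Module 𝕜 X] [TopologicalSpace X]
  [AddCommGroup Y] [Module 𝕜 Y] [TopologicalSpace Y]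

theorem finrank_range_smulRight [ContinuousSMul 𝕜 Y] {f : X →L[𝕜] 𝕜} {y : Y}
    (hf : f ≠ 0) (hy : y ≠ 0) :
    finrank 𝕜 (LinearMap.range (f.smulRight y : X →ₗ[𝕜] Y)) = 1 := by
  rw [range_smulRight_apply hf, finrank_span_singleton hy]

theorem smulRight_comp_self_eq_iff [ContinuousSMul 𝕜 X] {f : X →L[𝕜] 𝕜} {x : X}
    (hf : f ≠ 0) (hx : x ≠ 0) :
    f.smulRight x ∘L f.smulRight x = f.smulRight x ↔ f x = 1 := by
  refine ⟨fun h ↦ ?_, fun h ↦ by rw [smulRight_comp_smulRight, h, one_smul]⟩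
  obtain ⟨z, hz⟩ := DFunLike.ne_iff.mp hf
  have hzx : f z • f x • x = f z • x := by
    rw [smulRight_comp_smulRight] at h
    exact DFunLike.congr_fun h z
  have hxx : f x • x = x := smul_right_injective X hz hzx
  rwa [← smul_left_inj hx, one_smul]

end SmulRight

section RankOne

variable {𝕜 X Y : Type*} [NontriviallyNormedField 𝕜] [CompleteSpace 𝕜]
  [AddCommGroup X] [Module 𝕜 X] [TopologicalSpace X]
  [AddCommGroup Y] [Module 𝕜 Y] [TopologicalSpace Y]

theorem exists_eq_smulRight_of_finrank_range_eq_one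
    [IsTopologicalAddGroup Y] [ContinuousSMul 𝕜 Y] [T2Space Y] {A : X →L[𝕜] Y}
    (hA : finrank 𝕜 (LinearMap.range (A : X →ₗ[𝕜] Y)) = 1) :
    ∃ f : X →L[𝕜] 𝕜, ∃ y : Y, f ≠ 0 ∧ y ≠ 0 ∧ A = f.smulRight y := by
  have hA0 : A ≠ 0 := by
    rintro rfl
    rw [toLinearMap_zero, LinearMap.range_zero, finrank_bot] at hA
    exact zero_ne_one hA
  have : FiniteDimensional 𝕜 (LinearMap.range (A : X →ₗ[𝕜] Y)) := .of_finrank_pos (by simp [hA])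
  obtain ⟨e⟩ := nonempty_linearEquiv_of_finrank_eq_one hA
  let f : X →L[𝕜] 𝕜 := e.symm.toLinearMap.toContinuousLinearMap ∘L A.rangeRestrict
  have hAf : A = f.smulRight (e 1 : Y) := by
    ext z
    have hz : f z • e 1 = A.rangeRestrict z := by
      rw [← map_smul, smul_eq_mul, mul_one]
      exact e.apply_symm_apply _
    exact (congrArg Subtype.val hz).symm
  refine ⟨f, e 1, fun hf ↦ hA0 ?_, fun hy ↦ hA0 ?_, hAf⟩
  · rw [hAf, hf, zero_smulRight]
  · rw [hAf, hy, smulRight_zero]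

variable [IsTopologicalAddGroup X] [ContinuousSMul 𝕜 X] [T2Space X]

theorem exists_eq_smulRight_of_comp_self_eq {P : X →L[𝕜] X} (hP : P ∘L P = P)
    (hPr : finrank 𝕜 (LinearMap.range (P : X →ₗ[𝕜] X)) = 1) :
    ∃ f : X →L[𝕜] 𝕜, ∃ x : X, f ≠ 0 ∧ x ≠ 0 ∧ f x = 1 ∧ P = f.smulRight x := by
  obtain ⟨f, x, hf, hx, rfl⟩ := exists_eq_smulRight_of_finrank_range_eq_one hPr
  exact ⟨f, x, hf, hx, (smulRight_comp_self_eq_iff hf hx).mp hP, rfl⟩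

theorem stmt14_general (P Q : X →L[𝕜] X) (hP : P ∘L P = P) (hQ : Q ∘L Q = Q)
    (hPr : finrank 𝕜 (LinearMap.range (P : X →ₗ[𝕜] X)) = 1)
    (hQr : finrank 𝕜 (LinearMap.range (Q : X →ₗ[𝕜] X)) = 1) :
    ∃ S T : X →L[𝕜] X,
      finrank 𝕜 (LinearMap.range (S : X →ₗ[𝕜] X)) = 1 ∧
      finrank 𝕜 (LinearMap.range (T : X →ₗ[𝕜] X)) = 1 ∧
      P - Q = S ∘L T - T ∘L S := by
  obtain ⟨f, x, hf, hx, hfx, rfl⟩ := exists_eq_smulRight_of_comp_self_eq hP hPr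
  obtain ⟨g, y, hg, hy, hgy, rfl⟩ := exists_eq_smulRight_of_comp_self_eq hQ hQr
  refine ⟨g.smulRight x, f.smulRight y, finrank_range_smulRight hg hx,
    finrank_range_smulRight hf hy, ?_⟩
  rw [smulRight_comp_smulRight, smulRight_comp_smulRight, hgy, hfx, one_smul, one_smul]

end RankOne

theorem stmt14 {X : Type*} [NormedAddCommGroup X] [NormedSpace ℂ X] [CompleteSpace X]
    (P Q : X →L[ℂ] X)
    (hP : P ∘L P = P) (hQ : Q ∘L Q = Q)
    (hPr : Module.finrank ℂ (LinearMap.range (P : X →ₗ[ℂ] X)) = 1)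
    (hQr : Module.finrank ℂ (LinearMap.range (Q : X →ₗ[ℂ] X)) = 1) :
    ∃ S T : X →L[ℂ] X,
      Module.finrank ℂ (LinearMap.range (S : X →ₗ[ℂ] X)) = 1 ∧
      Module.finrank ℂ (LinearMap.range (T : X →ₗ[ℂ] X)) = 1 ∧
      P - Q = S ∘L T - T ∘L S :=
  stmt14_general P Q hP hQ hPr hQr
end
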